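/- arXiv:2605.08026 — 3 statements merged into one kernel-verified Lean document; each statement's English description precedes it below -/
import Mathlib

section
/- If x̄ is a local minimizer of (P), then at least one of the following assertions holds: (a) x̄ is M-stationary; (b) there exist a critical direction d ∈ C(x̄) ∩ 𝕊 and an AM-stationary sequence {(x^k, λ^k, δ^k, ε^k)} w.r.t. x̄ in direction d that fulfills ‖λ^k‖ → ∞ as well as x^k ∉ X and δ^k ≠ 0 for all k. -/
open Filter Topology Metric Set
open scoped RealInnerProductSpace Pointwise

noncomputable section

/-- Euclidean space `ℝ^n`. -/
abbrev Eu (n : ℕ) := EuclideanSpace ℝ (Fin n)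

section Cones

variable {H : Type*} [NormedAddCommGroup H] [InnerProductSpace ℝ H]

/-- Tangent (Bouligand) cone to `Ω` at `x` (empty if `x ∉ Ω`). -/
def tanCone (Ω : Set H) (x : H) : Set H :=
  {d | x ∈ Ω ∧ ∃ (dk : ℕ → H) (tk : ℕ → ℝ),
    Tendsto dk atTop (𝓝 d) ∧ (∀ k, 0 < tk k) ∧ Tendsto tk atTop (𝓝 0) ∧
    ∀ k, x + tk k • dk k ∈ Ω}

/-- Polar cone of a set. -/
def polarCone (C : Set H) : Set H := {y | ∀ x ∈ C, ⟪x, y⟫ ≤ 0}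

/-- Regular (Fréchet) normal cone: polar of the tangent cone (empty if `x ∉ Ω`). -/
def regNormal (Ω : Set H) (x : H) : Set H :=
  {η | x ∈ Ω ∧ η ∈ polarCone (tanCone Ω x)}

/-- Limiting (Mordukhovich) normal cone (empty if `x ∉ Ω`). -/
def limNormal (Ω : Set H) (x : H) : Set H :=
  {η | x ∈ Ω ∧ ∃ (xk ηk : ℕ → H),
    Tendsto xk atTop (𝓝 x) ∧ Tendsto ηk atTop (𝓝 η) ∧
    ∀ k, ηk k ∈ regNormal Ω (xk k)}

/-- Directional limiting normal cone to `Ω` at `x` in direction `d`. -/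
def dirLimNormal (Ω : Set H) (x d : H) : Set H :=
  {η | x ∈ Ω ∧ ∃ (dk : ℕ → H) (tk : ℕ → ℝ) (ηk : ℕ → H),
    Tendsto dk atTop (𝓝 d) ∧ (∀ k, 0 < tk k) ∧ Tendsto tk atTop (𝓝 0) ∧
    Tendsto ηk atTop (𝓝 η) ∧
    ∀ k, ηk k ∈ regNormal Ω (x + tk k • dk k)}

/-- The pair `(ξ, r)` as an element of the ℓ²-product `H ×₂ ℝ`. -/
def pl2 (ξ : H) (r : ℝ) : WithLp 2 (H × ℝ) := (WithLp.equiv 2 (H × ℝ)).symm (ξ, r)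

/-- Epigraph of `φ` as a subset of the ℓ²-product `H ×₂ ℝ`. -/
def epigraphSet (φ : H → ℝ) : Set (WithLp 2 (H × ℝ)) :=
  {p | φ ((WithLp.equiv 2 (H × ℝ)) p).1 ≤ ((WithLp.equiv 2 (H × ℝ)) p).2}

/-- Limiting subdifferential of `φ` at `x`. -/
def limSubdiff (φ : H → ℝ) (x : H) : Set H :=
  {ξ | pl2 ξ (-1) ∈ limNormal (epigraphSet φ) (pl2 x (φ x))}

/-- Directional limiting subdifferential of `φ` at `x` in direction `d`, where `φd`
denotes the directional derivative `φ'(x; d)`. -/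
def dirLimSubdiff (φ : H → ℝ) (x d : H) (φd : ℝ) : Set H :=
  {ξ | pl2 ξ (-1) ∈ dirLimNormal (epigraphSet φ) (pl2 x (φ x)) (pl2 d φd)}

/-- Directional neighborhood `B_{ε,δ}(d)`. -/
def dirNbhd (d : H) (ε δ : ℝ) : Set H :=
  {y | ‖y‖ ≤ ε ∧ ‖‖d‖ • y - ‖y‖ • d‖ ≤ δ * (‖y‖ * ‖d‖)}

end Cones

section Problem

variable {n l : ℕ}

/-- `F' x d` is the directional derivative of `F` at `x` in direction `d`. -/
def IsDirDeriv (F : Eu n → Eu l) (F' : Eu n → Eu n → Eu l) : Prop :=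
  ∀ x d : Eu n,
    Tendsto (fun t : ℝ => t⁻¹ • (F (x + t • d) - F x)) (𝓝[>] (0:ℝ)) (𝓝 (F' x d))

/-- Limiting subdifferential of the scalarization `⟨λ, F⟩` at `x`. -/
def scalSubdiff (F : Eu n → Eu l) (lam : Eu l) (x : Eu n) : Set (Eu n) :=
  limSubdiff (fun y => ⟪lam, F y⟫) x

/-- Directional limiting subdifferential of `⟨λ, F⟩` at `x` in direction `d`. -/
def scalDirSubdiff (F : Eu n → Eu l) (F' : Eu n → Eu n → Eu l) (lam : Eu l)
    (x d : Eu n) : Set (Eu n) :=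
  dirLimSubdiff (fun y => ⟪lam, F y⟫) x d ⟪lam, F' x d⟫

/-- Linearization cone. -/
def linCone (F : Eu n → Eu l) (F' : Eu n → Eu n → Eu l) (Γ : Set (Eu l)) (x : Eu n) :
    Set (Eu n) :=
  {d | F' x d ∈ tanCone Γ (F x)}

/-- Explicit critical cone `C(x̄)`. -/
def critCone (f : Eu n → ℝ) (F : Eu n → Eu l) (F' : Eu n → Eu n → Eu l)
    (Γ : Set (Eu l)) (x : Eu n) : Set (Eu n) :=
  {d | ⟪gradient f x, d⟫ ≤ 0 ∧ d ∈ linCone F F' Γ x}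

/-- Implicit critical cone `Ĉ(x̄)`. -/
def implCritCone (f : Eu n → ℝ) (F : Eu n → Eu l) (Γ : Set (Eu l)) (x : Eu n) :
    Set (Eu n) :=
  {d | ⟪gradient f x, d⟫ ≤ 0 ∧ d ∈ tanCone (F ⁻¹' Γ) x}

/-- M-stationarity. -/
def MStat (f : Eu n → ℝ) (F : Eu n → Eu l) (Γ : Set (Eu l)) (x : Eu n) : Prop :=
  ∃ lam : Eu l, -gradient f x ∈ scalSubdiff F lam x ∧ lam ∈ limNormal Γ (F x)

/-- M-stationarity in direction `d`. -/
def MStatDir (f : Eu n → ℝ) (F : Eu n → Eu l) (F' : Eu n → Eu n → Eu l)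
    (Γ : Set (Eu l)) (x d : Eu n) : Prop :=
  ∃ lam : Eu l, -gradient f x ∈ scalDirSubdiff F F' lam x d ∧
    lam ∈ dirLimNormal Γ (F x) (F' x d)

/-- Metric subregularity constraint qualification in direction `d`. -/
def MSCQdir (F : Eu n → Eu l) (Γ : Set (Eu l)) (x d : Eu n) : Prop :=
  ∃ ε > (0:ℝ), ∃ δ > (0:ℝ), ∃ κ > (0:ℝ), ∀ y : Eu n, y - x ∈ dirNbhd d ε δ →
    infDist y (F ⁻¹' Γ) ≤ κ * infDist (F y) Γ

/-- Metric subregularity constraint qualification. -/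
def MSCQ (F : Eu n → Eu l) (Γ : Set (Eu l)) (x : Eu n) : Prop := MSCQdir F Γ x 0

/-- AM-stationary sequence w.r.t. `x`. -/
def AMSeq (f : Eu n → ℝ) (F : Eu n → Eu l) (Γ : Set (Eu l)) (x : Eu n)
    (xk : ℕ → Eu n) (lamk δk : ℕ → Eu l) (εk : ℕ → Eu n) : Prop :=
  (∀ k, εk k - gradient f (xk k) ∈ scalSubdiff F (lamk k) (xk k)) ∧
  (∀ k, lamk k ∈ limNormal Γ (F (xk k) - δk k)) ∧
  Tendsto xk atTop (𝓝 x) ∧ Tendsto δk atTop (𝓝 0) ∧ Tendsto εk atTop (𝓝 0)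

/-- AM-stationarity. -/
def AMStat (f : Eu n → ℝ) (F : Eu n → Eu l) (Γ : Set (Eu l)) (x : Eu n) : Prop :=
  ∃ xk lamk δk εk, AMSeq f F Γ x xk lamk δk εk

/-- AM-stationary sequence w.r.t. `x` in direction `d`. -/
def AMSeqDir (f : Eu n → ℝ) (F : Eu n → Eu l) (Γ : Set (Eu l)) (x : Eu n)
    (xk : ℕ → Eu n) (lamk δk : ℕ → Eu l) (εk : ℕ → Eu n) (d : Eu n) : Prop :=
  AMSeq f F Γ x xk lamk δk εk ∧
  (∀ k, xk k ≠ x) ∧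
  Tendsto (fun k => ‖xk k - x‖⁻¹ • (xk k - x)) atTop (𝓝 d) ∧
  Tendsto (fun k => ‖xk k - x‖⁻¹ • δk k) atTop (𝓝 (0 : Eu l)) ∧
  (∃ θ : ℕ → ℝ, (∀ k, 0 ≤ θ k) ∧ Tendsto θ atTop (𝓝 0) ∧
    ∀ k, ‖‖δk k‖ • lamk k - ‖lamk k‖ • δk k‖ ≤ ‖δk k‖ * ‖lamk k‖ * θ k) ∧
  (∃ M : ℝ, ∀ k, ‖δk k‖ * ‖lamk k‖ / ‖xk k - x‖ ≤ M)

/-- AM-stationarity in direction `d`. -/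
def AMStatDir (f : Eu n → ℝ) (F : Eu n → Eu l) (Γ : Set (Eu l)) (x d : Eu n) : Prop :=
  ∃ xk lamk δk εk, AMSeqDir f F Γ x xk lamk δk εk d

/-- The Minkowski sum `Σ_i |λ_i| ∂(sgn(λ_i) F_i)(x; d)`. -/
def dirSumSet (F : Eu n → Eu l) (F' : Eu n → Eu n → Eu l) (lam : Eu l) (x d : Eu n) :
    Set (Eu n) :=
  {v | ∃ s : Fin l → Eu n,
    (∀ i, s i ∈ |lam i| • dirLimSubdiff (fun y => Real.sign (lam i) * F y i) x d
        (Real.sign (lam i) * F' x d i)) ∧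
    v = ∑ i, s i}

/-- Standing sum-rule assumption. -/
def SumRule (F : Eu n → Eu l) (F' : Eu n → Eu n → Eu l) : Prop :=
  ∀ (x d : Eu n) (lam : Eu l), scalDirSubdiff F F' lam x d = dirSumSet F F' lam x d

end Problem


section Helpers

variable {H : Type*} [NormedAddCommGroup H] [InnerProductSpace ℝ H]

/-- Regular (Frechet) subgradient in epsilon form. -/
def RegSub (φ : H → ℝ) (x ξ : H) : Prop :=
  ∀ c > (0:ℝ), ∀ᶠ y in 𝓝 x, φ x + ⟪ξ, y - x⟫ - c * ‖y - x‖ ≤ φ y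

lemma proj_regNormal {Γ : Set H} {p y : H} (hy : y ∈ Γ) (h : infDist p Γ = dist p y)
    {c : ℝ} (hc : 0 ≤ c) : c • (p - y) ∈ regNormal Γ y := by
  refine ⟨hy, ?_⟩
  rintro d ⟨-, dk, tk, hd, ht, ht0, hmem⟩
  have key : ∀ k, 2 * ⟪dk k, p - y⟫ ≤ tk k * ‖dk k‖ ^ 2 := by
    intro k
    have h1 : dist p y ≤ dist p (y + tk k • dk k) := h ▸ infDist_le_dist_of_mem (hmem k)
    rw [dist_eq_norm, dist_eq_norm] at h1
    have h2 : ‖p - (y + tk k • dk k)‖ ^ 2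
        = ‖p - y‖ ^ 2 - 2 * (tk k * ⟪dk k, p - y⟫) + tk k ^ 2 * ‖dk k‖ ^ 2 := by
      rw [← sub_sub, norm_sub_sq_real, inner_smul_right, norm_smul, mul_pow, Real.norm_eq_abs,
        sq_abs, real_inner_comm]
    have h3 : ‖p - y‖ ^ 2 ≤ ‖p - (y + tk k • dk k)‖ ^ 2 := by gcongr
    have h4 : tk k * (2 * ⟪dk k, p - y⟫) ≤ tk k * (tk k * ‖dk k‖ ^ 2) := by nlinarith
    exact le_of_mul_le_mul_left h4 (ht k)
  have l1 : Tendsto (fun k => 2 * ⟪dk k, p - y⟫) atTop (𝓝 (2 * ⟪d, p - y⟫)) :=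
    (hd.inner tendsto_const_nhds).const_mul 2
  have l2 : Tendsto (fun k => tk k * ‖dk k‖ ^ 2) atTop (𝓝 (0 * ‖d‖ ^ 2)) :=
    ht0.mul (hd.norm.pow 2)
  have := le_of_tendsto_of_tendsto' l1 l2 key
  rw [inner_smul_right]
  nlinarith

lemma regNormal_subset_limNormal {Ω : Set H} {y η : H} (h : η ∈ regNormal Ω y) :
    η ∈ limNormal Ω y :=
  ⟨h.1, fun _ => y, fun _ => η, tendsto_const_nhds, tendsto_const_nhds, fun _ => h⟩

lemma RegSub.regNormal {φ : H → ℝ} {x ξ : H} (h : RegSub φ x ξ) :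
    pl2 ξ (-1) ∈ regNormal (epigraphSet φ) (pl2 x (φ x)) := by
  refine ⟨by simp [epigraphSet, pl2], ?_⟩
  rintro d ⟨-, dk, tk, hd, ht, ht0, hmem⟩
  have hd1 : Tendsto (fun k => (dk k).fst) atTop (𝓝 d.fst) :=
    ((WithLp.continuous_fst (p := 2) (α := H) (β := ℝ)).tendsto d).comp hd
  have hd2 : Tendsto (fun k => (dk k).snd) atTop (𝓝 d.snd) :=
    ((WithLp.continuous_snd (p := 2) (α := H) (β := ℝ)).tendsto d).comp hd
  have hx : Tendsto (fun k => x + tk k • (dk k).fst) atTop (𝓝 x) := by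
    simpa using tendsto_const_nhds.add (ht0.smul hd1)
  have key : ∀ c > (0:ℝ), ⟪ξ, d.fst⟫ - c * ‖d.fst‖ ≤ d.snd := by
    intro c hc
    have e := hx.eventually (h c hc)
    refine le_of_tendsto_of_tendsto
      ((tendsto_const_nhds.inner hd1).sub (hd1.norm.const_mul c)) hd2 ?_
    filter_upwards [e] with k hk
    have hm : φ (x + tk k • (dk k).fst) ≤ φ x + tk k * (dk k).snd := by
      simpa [epigraphSet, pl2] using hmem k
    rw [add_sub_cancel_left, inner_smul_right, norm_smul, Real.norm_eq_abs,
      abs_of_pos (ht k)] at hk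
    refine le_of_mul_le_mul_left ?_ (ht k)
    nlinarith
  have h2 : ⟪ξ, d.fst⟫ ≤ d.snd := by
    have l : Tendsto (fun c : ℝ => ⟪ξ, d.fst⟫ - c * ‖d.fst‖) (𝓝[>] 0)
        (𝓝 (⟪ξ, d.fst⟫ - 0 * ‖d.fst‖)) := by
      apply Tendsto.mono_left _ nhdsWithin_le_nhds
      apply Continuous.tendsto
      fun_prop
    have := le_of_tendsto l (by
      filter_upwards [self_mem_nhdsWithin] with c hc using key c hc)
    simpa using this
  have : ⟪d, pl2 ξ (-1)⟫ = ⟪ξ, d.fst⟫ - d.snd := by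
    simp [pl2, WithLp.prod_inner_apply, real_inner_comm]
    try ring
  rw [this]
  linarith

lemma RegSub.limSubdiff {φ : H → ℝ} {x ξ : H} (h : RegSub φ x ξ) : ξ ∈ limSubdiff φ x :=
  regNormal_subset_limNormal h.regNormal

/-- Limits of regular subgradients are limiting subgradients. -/
lemma mem_limSubdiff_of_forall {φ : H → ℝ} (hφ : Continuous φ) {x ξ : H}
    (h : ∀ ε > (0:ℝ), ∃ z ζ, dist z x < ε ∧ dist ζ ξ < ε ∧ RegSub φ z ζ) :
    ξ ∈ limSubdiff φ x := by
  choose z ζ hz hζ hr using fun k : ℕ => h (1 / ((k:ℝ) + 1)) (by positivity)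
  have lz : Tendsto z atTop (𝓝 x) := by
    rw [tendsto_iff_dist_tendsto_zero]
    exact squeeze_zero (fun _ => dist_nonneg) (fun k => (hz k).le)
      tendsto_one_div_add_atTop_nhds_zero_nat
  have lζ : Tendsto ζ atTop (𝓝 ξ) := by
    rw [tendsto_iff_dist_tendsto_zero]
    exact squeeze_zero (fun _ => dist_nonneg) (fun k => (hζ k).le)
      tendsto_one_div_add_atTop_nhds_zero_nat
  have cont : Continuous (fun q : H × ℝ => (WithLp.toLp 2 q : WithLp 2 (H × ℝ))) :=
    WithLp.prod_continuous_toLp 2 H ℝ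
  refine ⟨by simp [epigraphSet, pl2], fun k => pl2 (z k) (φ (z k)), fun k => pl2 (ζ k) (-1),
    ?_, ?_, fun k => (hr k).regNormal⟩
  · exact (cont.tendsto (x, φ x)).comp (lz.prodMk_nhds ((hφ.tendsto x).comp lz))
  · exact (cont.tendsto (ξ, -1)).comp (lζ.prodMk_nhds tendsto_const_nhds)

/-- A smooth variational principle in finite dimension. -/
lemma exists_regSub_near [ProperSpace H] {φ : H → ℝ} (hφ : Continuous φ) {x ξ : H} {η : ℝ}
    (hη : 0 < η) (h : ∀ᶠ y in 𝓝 x, φ x + ⟪ξ, y - x⟫ - η * ‖y - x‖ ≤ φ y)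
    {r : ℝ} (hr : 0 < r) :
    ∃ z ζ, dist z x < r ∧ dist ζ ξ ≤ 4 * η ∧ RegSub φ z ζ := by
  obtain ⟨s, hs, hball⟩ := Metric.eventually_nhds_iff.1 h
  obtain ⟨ρ, hρ, hρr, hρs⟩ : ∃ ρ > 0, ρ < r ∧ ρ < s :=
    ⟨min r s / 2, by positivity, by
      have := min_le_left r s; have : 0 < min r s := lt_min hr hs; linarith, by
      have := min_le_right r s; have : 0 < min r s := lt_min hr hs; linarith⟩
  set a := 2 * η / ρ with ha
  have hapos : 0 < a := by positivity
  have haρ : a * ρ = 2 * η := by rw [ha]; field_simp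
  obtain ⟨z, hz, hzmin⟩ := (isCompact_closedBall x ρ).exists_isMinOn
    ⟨x, mem_closedBall_self hρ.le⟩
    (f := fun y => φ y - ⟪ξ, y - x⟫ + a * ‖y - x‖ ^ 2) (by fun_prop)
  rw [isMinOn_iff] at hzmin
  have hzx := hzmin x (mem_closedBall_self hρ.le)
  simp only [sub_self, inner_zero_right, norm_zero] at hzx
  rw [mem_closedBall] at hz
  have hb := hball (lt_of_le_of_lt hz hρs)
  have hzlt : ‖z - x‖ < ρ := by
    rw [dist_eq_norm] at hz
    refine lt_of_le_of_ne hz fun he => ?_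
    rw [he] at hzx hb
    have : a * ρ ^ 2 = 2 * η * ρ := by rw [← haρ]; ring
    have : 0 < η * ρ := by positivity
    nlinarith
  refine ⟨z, ξ - (2 * a) • (z - x), by rw [dist_eq_norm]; linarith, ?_, ?_⟩
  · rw [dist_eq_norm, sub_sub_cancel_left, norm_neg, norm_smul, Real.norm_eq_abs,
      abs_of_pos (by positivity)]
    nlinarith
  · intro c hc
    have e1 : ∀ᶠ y in 𝓝 z, y ∈ closedBall x ρ :=
      closedBall_mem_nhds_of_mem (by rw [mem_ball, dist_eq_norm]; exact hzlt)
    have e2 : ∀ᶠ y in 𝓝 z, a * ‖y - z‖ < c := by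
      have : Tendsto (fun y => a * ‖y - z‖) (𝓝 z) (𝓝 (a * ‖z - z‖)) :=
        Continuous.tendsto (by fun_prop) z
      exact this.eventually (gt_mem_nhds (by simpa using hc))
    filter_upwards [e1, e2] with y hy1 hy2
    have hm := hzmin y hy1
    have e3 : y - x = (y - z) + (z - x) := by abel
    have e4 : ‖y - x‖ ^ 2 = ‖y - z‖ ^ 2 + 2 * ⟪z - x, y - z⟫ + ‖z - x‖ ^ 2 := by
      rw [e3, norm_add_sq_real, real_inner_comm]
    rw [e4] at hm
    rw [e3, inner_add_right] at hm
    rw [inner_sub_left, inner_smul_left]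
    simp only [conj_trivial]
    nlinarith [norm_nonneg (y - z)]

end Helpers

section Helpers2

variable {n l : ℕ}

/-- Bounded multipliers: passage to the limit. -/
lemma limit_subdiff (F : Eu n → Eu l) (hLip : LocallyLipschitz F) {x ξ : Eu n} {lam : Eu l}
    {xk ξk : ℕ → Eu n} {lamk : ℕ → Eu l} (hx : Tendsto xk atTop (𝓝 x))
    (hξ : Tendsto ξk atTop (𝓝 ξ)) (hl : Tendsto lamk atTop (𝓝 lam))
    (h : ∀ k, RegSub (fun y => ⟪lamk k, F y⟫) (xk k) (ξk k)) :
    ξ ∈ scalSubdiff F lam x := by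
  have hFc := hLip.continuous
  refine mem_limSubdiff_of_forall (by fun_prop) fun ε hε => ?_
  obtain ⟨K, t, ht, hK⟩ := hLip x
  have e1 : ∀ᶠ k in atTop, ∀ᶠ y in 𝓝 (xk k), y ∈ t :=
    hx.eventually (eventually_eventually_nhds.2 ht)
  have e2 : ∀ᶠ k in atTop, dist (xk k) x < ε / 2 := hx.eventually (ball_mem_nhds x (by positivity))
  have e3 : ∀ᶠ k in atTop, dist (ξk k) ξ < ε / 2 := hξ.eventually (ball_mem_nhds ξ (by positivity))
  have e4 : ∀ᶠ k in atTop, K * ‖lamk k - lam‖ < ε / 32 := by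
    have : Tendsto (fun k => K * ‖lamk k - lam‖) atTop (𝓝 (K * ‖lam - lam‖)) :=
      ((hl.sub tendsto_const_nhds).norm).const_mul _
    exact this.eventually (gt_mem_nhds (by simpa using by positivity))
  obtain ⟨k, h1, h2, h3, h4⟩ := (e1.and (e2.and (e3.and e4))).exists
  have hxt : xk k ∈ t := h1.self_of_nhds
  obtain ⟨z, ζ, hz, hζ, hreg⟩ := exists_regSub_near (φ := fun y => ⟪lam, F y⟫) (by fun_prop)
    (x := xk k) (ξ := ξk k) (η := ε / 16) (by positivity) (by
      filter_upwards [h1, h k (ε / 32) (by positivity)] with y hy hy2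
      have q1 : ‖F y - F (xk k)‖ ≤ K * ‖y - xk k‖ := hK.norm_sub_le hy hxt
      have q2 : ⟪lamk k - lam, F y - F (xk k)⟫ ≤ ‖lamk k - lam‖ * (K * ‖y - xk k‖) :=
        (real_inner_le_norm _ _).trans (by gcongr)
      rw [inner_sub_left, inner_sub_right, inner_sub_right] at q2
      nlinarith [norm_nonneg (y - xk k)]) (r := ε / 2) (by positivity)
  refine ⟨z, ζ, ?_, ?_, hreg⟩
  · linarith [dist_triangle z (xk k) x]
  · linarith [dist_triangle ζ (ξk k) ξ]

/-- Stationarity of the penalized problem. -/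
lemma pen_regSub {f : Eu n → ℝ} (hf : Differentiable ℝ f) {F : Eu n → Eu l}
    (hLip : LocallyLipschitz F) {x z : Eu n} {y : Eu l} {c : ℝ} (hc : 0 ≤ c)
    (h : ∀ᶠ w in 𝓝 z, f z + c / 2 * ‖F z - y‖ ^ 2 + 1 / 2 * ‖z - x‖ ^ 2
      ≤ f w + c / 2 * ‖F w - y‖ ^ 2 + 1 / 2 * ‖w - x‖ ^ 2) :
    RegSub (fun w => ⟪c • (F z - y), F w⟫) z (-(z - x) - gradient f z) := by
  intro e he
  obtain ⟨K, t, ht, hK⟩ := hLip z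
  have hg := (hf z).hasGradientAt.hasFDerivAt.isLittleO
  have hg' := hg.def (show 0 < e / 2 by positivity)
  have e2 : ∀ᶠ w in 𝓝 z, (c / 2 * K ^ 2 + 1 / 2) * ‖w - z‖ < e / 2 := by
    have : Tendsto (fun w => (c / 2 * K ^ 2 + 1 / 2) * ‖w - z‖) (𝓝 z)
        (𝓝 ((c / 2 * K ^ 2 + 1 / 2) * ‖z - z‖)) := Continuous.tendsto (by fun_prop) z
    exact this.eventually (gt_mem_nhds (by simpa using by positivity))
  filter_upwards [h, ht, hg', e2] with w h1 h2 h3 h4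
  have q1 : ‖F w - F z‖ ≤ K * ‖w - z‖ := hK.norm_sub_le h2 (mem_of_mem_nhds ht)
  have q2 : ‖F w - F z‖ ^ 2 ≤ K ^ 2 * ‖w - z‖ ^ 2 := by rw [← mul_pow]; gcongr
  have h3' := (abs_le.1 ((Real.norm_eq_abs _).symm.le.trans h3)).2
  simp only [InnerProductSpace.toDual_apply_apply] at h3'
  have e3 : ‖w - x‖ ^ 2 = ‖w - z‖ ^ 2 + 2 * ⟪z - x, w - z⟫ + ‖z - x‖ ^ 2 := by
    rw [show w - x = (w - z) + (z - x) by abel, norm_add_sq_real, real_inner_comm]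
  have e4 : ‖F w - y‖ ^ 2 = ‖F w - F z‖ ^ 2 + 2 * ⟪F z - y, F w - F z⟫ + ‖F z - y‖ ^ 2 := by
    rw [show F w - y = (F w - F z) + (F z - y) by abel, norm_add_sq_real, real_inner_comm]
  rw [e3, e4] at h1
  rw [inner_sub_left, inner_neg_left, inner_smul_left, inner_smul_left]
  simp only [conj_trivial]
  rw [inner_sub_right (F z - y)] at h1
  have q3 : c / 2 * ‖F w - F z‖ ^ 2 ≤ c / 2 * (K ^ 2 * ‖w - z‖ ^ 2) := by gcongr
  have q4 : (c / 2 * K ^ 2 + 1 / 2) * ‖w - z‖ * ‖w - z‖ ≤ e / 2 * ‖w - z‖ := by gcongr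
  nlinarith

/-- Existence of good penalized minimizers. -/
lemma exists_pen {f : Eu n → ℝ} (hf : Continuous f) {F : Eu n → Eu l} (hF : Continuous F)
    {Γ : Set (Eu l)} (hΓcl : IsClosed Γ) {x : Eu n} (hfeas : F x ∈ Γ)
    (hmin : IsLocalMinOn f (F ⁻¹' Γ) x) {ε : ℝ} (hε : 0 < ε) :
    ∃ (c : ℝ) (z : Eu n) (y : Eu l), 0 ≤ c ∧ dist z x < ε ∧ y ∈ Γ ∧
      infDist (F z) Γ = dist (F z) y ∧
      f z + c / 2 * ‖F z - y‖ ^ 2 + 1 / 2 * ‖z - x‖ ^ 2 ≤ f x ∧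
      ∀ᶠ w in 𝓝 z, f z + c / 2 * ‖F z - y‖ ^ 2 + 1 / 2 * ‖z - x‖ ^ 2
        ≤ f w + c / 2 * ‖F w - y‖ ^ 2 + 1 / 2 * ‖w - x‖ ^ 2 := by
  have hne : Γ.Nonempty := ⟨_, hfeas⟩
  have hmin' : ∀ᶠ w in 𝓝 x, F w ∈ Γ → f x ≤ f w := eventually_nhdsWithin_iff.1 hmin
  obtain ⟨s, hs, hball⟩ := Metric.eventually_nhds_iff.1 hmin'
  obtain ⟨ρ, hρ, hρr, hρs⟩ : ∃ ρ > 0, ρ < ε ∧ ρ < s :=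
    ⟨min ε s / 2, by positivity, by
      have := min_le_left ε s; have : 0 < min ε s := lt_min hε hs; linarith, by
      have := min_le_right ε s; have : 0 < min ε s := lt_min hε hs; linarith⟩
  have hxB : x ∈ closedBall x ρ := mem_closedBall_self hρ.le
  have hcd : Continuous (fun w => infDist (F w) Γ) := (continuous_infDist_pt Γ).comp hF
  have hex : ∀ k : ℕ, ∃ z ∈ closedBall x ρ, IsMinOn
      (fun w => f w + (k:ℝ) / 2 * infDist (F w) Γ ^ 2 + 1 / 2 * ‖w - x‖ ^ 2) (closedBall x ρ) z :=
    fun k => (isCompact_closedBall x ρ).exists_isMinOn ⟨x, hxB⟩ (by fun_prop)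
  choose z hzB hz using hex
  have hzx : ∀ k : ℕ, f (z k) + (k:ℝ) / 2 * infDist (F (z k)) Γ ^ 2 + 1 / 2 * ‖z k - x‖ ^ 2
      ≤ f x := by
    intro k
    have := isMinOn_iff.1 (hz k) x hxB
    simpa [infDist_zero_of_mem hfeas] using this
  obtain ⟨a, haB, φ, hφ, hlim⟩ := (isCompact_closedBall x ρ).tendsto_subseq hzB
  obtain ⟨b, hbB, hb⟩ := (isCompact_closedBall x ρ).exists_isMinOn ⟨x, hxB⟩ hf.continuousOn
  rw [isMinOn_iff] at hb
  have hφt := hφ.tendsto_atTop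
  have hFa : F a ∈ Γ := by
    rw [hΓcl.mem_iff_infDist_zero hne]
    have l1 : Tendsto (fun k => infDist (F (z (φ k))) Γ ^ 2) atTop (𝓝 (infDist (F a) Γ ^ 2)) :=
      ((hcd.tendsto a).comp hlim).pow 2
    have l2 : Tendsto (fun k => 2 * (f x - f b) / (φ k : ℝ)) atTop (𝓝 0) :=
      tendsto_const_nhds.div_atTop (tendsto_natCast_atTop_atTop.comp hφt)
    have := le_of_tendsto_of_tendsto l1 l2 (by
      filter_upwards [hφt.eventually_gt_atTop 0] with k hk
      have hk' : (0:ℝ) < φ k := by exact_mod_cast hk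
      rw [le_div_iff₀ hk']
      have := hzx (φ k)
      have := hb _ (hzB (φ k))
      nlinarith [sq_nonneg ‖z (φ k) - x‖])
    exact pow_eq_zero_iff (two_ne_zero) |>.1 (le_antisymm this (sq_nonneg _))
  have hfa : f a + 1 / 2 * ‖a - x‖ ^ 2 ≤ f x := by
    have hc : Continuous (fun w => f w + 1 / 2 * ‖w - x‖ ^ 2) := by fun_prop
    refine le_of_tendsto ((hc.tendsto a).comp hlim) (Eventually.of_forall fun k => ?_)
    have := hzx (φ k)
    have : 0 ≤ (φ k : ℝ) / 2 * infDist (F (z (φ k))) Γ ^ 2 := by positivity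
    simp only [Function.comp]
    linarith
  have hax : a = x := by
    have h1 := hball (lt_of_le_of_lt (mem_closedBall.1 haB) hρs) hFa
    have h2 : ‖a - x‖ ^ 2 = 0 := le_antisymm (by linarith) (sq_nonneg _)
    exact sub_eq_zero.1 (norm_eq_zero.1 (pow_eq_zero_iff (two_ne_zero) |>.1 h2))
  subst hax
  obtain ⟨k, hk⟩ := (hlim.eventually (ball_mem_nhds a hρ)).exists
  obtain ⟨y, hy, hyd⟩ := hΓcl.exists_infDist_eq_dist hne (F (z (φ k)))
  have hk' : dist (z (φ k)) a < ρ := hk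
  refine ⟨(φ k : ℝ), z (φ k), y, by positivity, hk'.trans hρr, hy, hyd, ?_, ?_⟩
  · rw [← dist_eq_norm, ← hyd]; exact hzx _
  · filter_upwards [closedBall_mem_nhds_of_mem hk] with w hw
    have h1 := isMinOn_iff.1 (hz (φ k)) w hw
    have h2 : infDist (F w) Γ ≤ ‖F w - y‖ := by
      rw [← dist_eq_norm]; exact infDist_le_dist_of_mem hy
    have h3 : (φ k : ℝ) / 2 * infDist (F w) Γ ^ 2 ≤ (φ k : ℝ) / 2 * ‖F w - y‖ ^ 2 := by
      have := infDist_nonneg (x := F w) (s := Γ)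
      gcongr
    rw [← dist_eq_norm (F (z (φ k))), ← hyd]
    linarith

end Helpers2

/-- A local minimizer of (P) is either M-stationary or AM-stationary in some explicit
critical unit direction along a sequence with diverging multipliers, infeasible iterates
and nonvanishing perturbations. -/
theorem stmt15 {n l : ℕ}
    (f : Eu n → ℝ) (hf : ContDiff ℝ 1 f)
    (F : Eu n → Eu l) (F' : Eu n → Eu n → Eu l)
    (hLip : LocallyLipschitz F) (hF' : IsDirDeriv F F')
    (Γ : Set (Eu l)) (hΓne : Γ.Nonempty) (hΓcl : IsClosed Γ)
    (x : Eu n) (hfeas : F x ∈ Γ) (hmin : IsLocalMinOn f (F ⁻¹' Γ) x) :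
    MStat f F Γ x ∨
    ∃ d ∈ critCone f F F' Γ x, ‖d‖ = 1 ∧
      ∃ (xk : ℕ → Eu n) (lamk δk : ℕ → Eu l) (εk : ℕ → Eu n),
        AMSeqDir f F Γ x xk lamk δk εk d ∧
        Tendsto (fun k => ‖lamk k‖) atTop atTop ∧
        (∀ k, xk k ∉ F ⁻¹' Γ) ∧ (∀ k, δk k ≠ 0) := by
  have hfd : Differentiable ℝ f := hf.differentiable one_ne_zero
  have hFc := hLip.continuous
  have hgc : Continuous (gradient f) := by
    have := hf.continuous_fderiv one_ne_zero
    exact (LinearIsometryEquiv.continuous _).comp this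
  choose c z y hc hzd hy hyd hle hev using fun k : ℕ =>
    exists_pen hf.continuous hFc hΓcl hfeas hmin (show 0 < 1 / ((k:ℝ) + 1) by positivity)
  have hz : Tendsto z atTop (𝓝 x) := by
    rw [tendsto_iff_dist_tendsto_zero]
    exact squeeze_zero (fun _ => dist_nonneg) (fun k => (hzd k).le)
      tendsto_one_div_add_atTop_nhds_zero_nat
  have hFz : Tendsto (fun k => F (z k)) atTop (𝓝 (F x)) := (hFc.tendsto x).comp hz
  have hδ : Tendsto (fun k => F (z k) - y k) atTop (𝓝 0) := by
    rw [tendsto_zero_iff_norm_tendsto_zero]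
    have l : Tendsto (fun k => infDist (F (z k)) Γ) atTop (𝓝 (infDist (F x) Γ)) :=
      ((continuous_infDist_pt Γ).tendsto _).comp hFz
    rw [infDist_zero_of_mem hfeas] at l
    exact l.congr fun k => by rw [hyd k, dist_eq_norm]
  have hyl : Tendsto y atTop (𝓝 (F x)) := by simpa using hFz.sub hδ
  have hε : Tendsto (fun k => -(z k - x)) atTop (𝓝 0) := by
    simpa using (hz.sub_const x).neg
  set lam : ℕ → Eu l := fun k => c k • (F (z k) - y k) with hlam
  have hN : ∀ k, lam k ∈ regNormal Γ (y k) := fun k => proj_regNormal (hy k) (hyd k) (hc k)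
  have hS : ∀ k, RegSub (fun w => ⟪lam k, F w⟫) (z k) (-(z k - x) - gradient f (z k)) :=
    fun k => pen_regSub hfd hLip (hc k) (hev k)
  by_cases hinf : Tendsto (fun k => ‖lam k‖) atTop atTop
  swap
  · left
    rw [Filter.tendsto_atTop] at hinf
    push Not at hinf
    obtain ⟨M, hM⟩ := hinf
    obtain ⟨L, -, φ, hφ, hL⟩ := tendsto_subseq_of_frequently_bounded
      (isBounded_closedBall (x := (0 : Eu l)) (r := M)) (x := lam)
      (hM.mono fun k hk => by rw [mem_closedBall_zero_iff]; exact le_of_lt hk)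
    have ht := hφ.tendsto_atTop
    refine ⟨L, ?_, hfeas, y ∘ φ, lam ∘ φ, hyl.comp ht, hL, fun k => hN _⟩
    have hg : Tendsto (fun k => -(z k - x) - gradient f (z k)) atTop (𝓝 (-gradient f x)) := by
      simpa using hε.sub ((hgc.tendsto x).comp hz)
    exact limit_subdiff F hLip (hz.comp ht) (hg.comp ht) hL (fun k => hS (φ k))
  right
  -- direction
  obtain ⟨d, -, φ, hφ, hd⟩ := (isCompact_closedBall (0 : Eu n) 1).tendsto_subseq
    (x := fun k => ‖z k - x‖⁻¹ • (z k - x)) (fun k => by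
      rw [mem_closedBall_zero_iff, norm_smul, norm_inv, norm_norm]
      exact inv_mul_le_one)
  have hφt := hφ.tendsto_atTop
  obtain ⟨C, hC⟩ := ((hfd x).isBigO_sub).bound
  have E : ∀ᶠ k in atTop, 0 < ‖lam (φ k)‖ ∧ ‖f (z (φ k)) - f x‖ ≤ C * ‖z (φ k) - x‖ :=
    ((hinf.comp hφt).eventually_gt_atTop 0).and ((hz.comp hφt).eventually hC)
  obtain ⟨N, hNN⟩ := eventually_atTop.1 E
  set ψ : ℕ → ℕ := fun k => φ (k + N) with hψ
  have hψt : Tendsto ψ atTop atTop := hφt.comp (tendsto_add_atTop_nat N)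
  have hlpos : ∀ k, 0 < ‖lam (ψ k)‖ := fun k => (hNN (k + N) (by omega)).1
  have hCk : ∀ k, ‖f (z (ψ k)) - f x‖ ≤ C * ‖z (ψ k) - x‖ := fun k => (hNN (k + N) (by omega)).2
  have hdψ : Tendsto (fun k => ‖z (ψ k) - x‖⁻¹ • (z (ψ k) - x)) atTop (𝓝 d) :=
    hd.comp (tendsto_add_atTop_nat N)
  have hδne : ∀ k, F (z (ψ k)) - y (ψ k) ≠ 0 := fun k h0 => by
    have := hlpos k
    simp [hlam, h0] at this
  have hinfeas : ∀ k, F (z (ψ k)) ∉ Γ := fun k hk => by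
    have := hyd (ψ k)
    rw [infDist_zero_of_mem hk, dist_eq_norm] at this
    exact hδne k (norm_eq_zero.1 this.symm)
  have hne : ∀ k, z (ψ k) ≠ x := fun k hk => hinfeas k (hk ▸ hfeas)
  have hpos : ∀ k, 0 < ‖z (ψ k) - x‖ := fun k => norm_pos_iff.2 (sub_ne_zero.2 (hne k))
  have hzψ := hz.comp hψt
  have ht0 : Tendsto (fun k => ‖z (ψ k) - x‖) atTop (𝓝 0) := by
    simpa using (hzψ.sub_const x).norm
  have hnl : ∀ k, ‖lam k‖ = c k * ‖F (z k) - y k‖ := fun k => by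
    rw [hlam]; simp only [norm_smul, Real.norm_eq_abs, abs_of_nonneg (hc k)]
  have hB : ∀ k, ‖F (z (ψ k)) - y (ψ k)‖ * ‖lam (ψ k)‖ / ‖z (ψ k) - x‖ ≤ 2 * C := fun k => by
    rw [div_le_iff₀ (hpos k), hnl]
    have h1 := hle (ψ k)
    have h2 := (abs_le.1 ((Real.norm_eq_abs _).symm.le.trans (hCk k))).1
    nlinarith [sq_nonneg ‖z (ψ k) - x‖]
  have hlinf := hinf.comp hψt
  have hδt : Tendsto (fun k => ‖z (ψ k) - x‖⁻¹ • (F (z (ψ k)) - y (ψ k))) atTop (𝓝 0) := by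
    rw [tendsto_zero_iff_norm_tendsto_zero]
    refine squeeze_zero (fun _ => norm_nonneg _) (fun k => ?_)
      (tendsto_const_nhds.div_atTop hlinf : Tendsto (fun k => 2 * C / ‖lam (ψ k)‖) atTop (𝓝 0))
    rw [norm_smul, norm_inv, norm_norm, le_div_iff₀ (hlpos k)]
    refine le_trans (le_of_eq ?_) (hB k)
    rw [div_eq_inv_mul]; ring
  have hdn : ‖d‖ = 1 := by
    refine tendsto_nhds_unique hdψ.norm (tendsto_const_nhds.congr fun k => ?_)
    rw [norm_smul, norm_inv, norm_norm, inv_mul_cancel₀ (hpos k).ne']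
  have hzrw : ∀ k, x + ‖z (ψ k) - x‖ • (‖z (ψ k) - x‖⁻¹ • (z (ψ k) - x)) = z (ψ k) := fun k => by
    rw [smul_inv_smul₀ (hpos k).ne', add_sub_cancel]
  have htw : Tendsto (fun k => ‖z (ψ k) - x‖) atTop (𝓝[>] 0) :=
    tendsto_nhdsWithin_iff.2 ⟨ht0, Eventually.of_forall hpos⟩
  refine ⟨d, ⟨?_, ?_⟩, hdn, z ∘ ψ, lam ∘ ψ, fun k => F (z (ψ k)) - y (ψ k),
    fun k => -(z (ψ k) - x), ⟨⟨?_, ?_, hzψ, hδ.comp hψt, hε.comp hψt⟩, hne, hdψ, hδt, ?_,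
      2 * C, hB⟩, hlinf, hinfeas, hδne⟩
  · -- gradient condition
    have ho := (hfd x).hasGradientAt.hasFDerivAt.isLittleO
    have key : ∀ e > (0:ℝ), ⟪gradient f x, d⟫ ≤ e := by
      intro e he
      have h1 := hzψ.eventually (ho.def he)
      refine le_of_tendsto ((tendsto_const_nhds (x := gradient f x)).inner hdψ) ?_
      filter_upwards [h1] with k hk
      have hk' := (abs_le.1 ((Real.norm_eq_abs _).symm.le.trans hk)).1
      simp only [InnerProductSpace.toDual_apply_apply, Function.comp] at hk'
      have h2 := hle (ψ k)
      have h3 : 0 ≤ c (ψ k) / 2 * ‖F (z (ψ k)) - y (ψ k)‖ ^ 2 := by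
        have := hc (ψ k); positivity
      rw [inner_smul_right, inv_mul_le_iff₀ (hpos k)]
      nlinarith [sq_nonneg ‖z (ψ k) - x‖]
    exact le_of_forall_pos_le_add fun e he => by simpa using key e he
  · -- linearization cone
    refine ⟨hfeas, fun k => ‖z (ψ k) - x‖⁻¹ • (y (ψ k) - F x), fun k => ‖z (ψ k) - x‖, ?_,
      hpos, ht0, fun k => ?_⟩
    · have l1 := (hF' x d).comp htw
      obtain ⟨K, t, ht, hK⟩ := hLip x
      have l3 : Tendsto (fun k => x + ‖z (ψ k) - x‖ • d) atTop (𝓝 x) := by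
        simpa using tendsto_const_nhds.add (ht0.smul_const d)
      have l2 : Tendsto (fun k => ‖z (ψ k) - x‖⁻¹ •
          (F (z (ψ k)) - F (x + ‖z (ψ k) - x‖ • d))) atTop (𝓝 0) := by
        have l4 : Tendsto (fun k => K * ‖‖z (ψ k) - x‖⁻¹ • (z (ψ k) - x) - d‖) atTop (𝓝 0) := by
          simpa using ((hdψ.sub_const d).norm).const_mul (K : ℝ)
        refine squeeze_zero_norm' ?_ l4
        filter_upwards [l3.eventually ht, hzψ.eventually ht] with k h1 h2
        have q := hK.norm_sub_le h2 h1
        simp only [Function.comp] at q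
        rw [norm_smul, norm_inv, norm_norm, inv_mul_le_iff₀ (hpos k)]
        refine q.trans (le_of_eq ?_)
        have : z (ψ k) - (x + ‖z (ψ k) - x‖ • d)
            = ‖z (ψ k) - x‖ • (‖z (ψ k) - x‖⁻¹ • (z (ψ k) - x) - d) := by
          rw [smul_sub, smul_inv_smul₀ (hpos k).ne']; abel
        rw [this, norm_smul, norm_norm]; ring
      have l5 := (l1.add l2).sub hδt
      rw [add_zero, sub_zero] at l5
      refine l5.congr fun k => ?_
      simp only [Function.comp]
      rw [← smul_add, ← smul_sub]
      congr 1
      abel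
    · simp only
      rw [smul_inv_smul₀ (hpos k).ne', add_sub_cancel]
      exact hy _
  · exact fun k => (hS (ψ k)).limSubdiff
  · intro k
    simp only [Function.comp, sub_sub_cancel]
    exact regNormal_subset_limNormal (hN _)
  · refine ⟨fun _ => 0, fun _ => le_rfl, tendsto_const_nhds, fun k => ?_⟩
    simp only [Function.comp, mul_zero]
    rw [hnl]
    simp only [hlam, smul_smul]
    rw [mul_comm (c _), sub_self, norm_zero]

end
end

section
/- Let x̄ be a local minimizer of (P) and fix d ∈ Ĉ(x̄) ∩ 𝕊. If x̄ is AM-regular in direction d, then x̄ is M-stationary; if x̄ is strongly AM-regular in direction d, then x̄ is M-stationary in direction d. -/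
open Filter Topology Metric Set
open scoped RealInnerProductSpace Pointwise

noncomputable section

section AMReg

variable {n l : ℕ}

/-- The premises on a sequence used to test (strong) AM-regularity in direction `d`. -/
def AMRegDirData (F : Eu n → Eu l) (Γ : Set (Eu l)) (x d : Eu n)
    (xk : ℕ → Eu n) (lamk δk : ℕ → Eu l) (ξk : ℕ → Eu n) (ξ : Eu n) : Prop :=
  (∀ k, ξk k ∈ scalSubdiff F (lamk k) (xk k)) ∧
  (∀ k, lamk k ∈ limNormal Γ (F (xk k) - δk k)) ∧
  (∀ k, xk k ≠ x) ∧
  Tendsto xk atTop (𝓝 x) ∧ Tendsto δk atTop (𝓝 0) ∧ Tendsto ξk atTop (𝓝 ξ) ∧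
  Tendsto (fun k => ‖lamk k‖) atTop atTop ∧
  Tendsto (fun k => ‖xk k - x‖⁻¹ • (xk k - x)) atTop (𝓝 d) ∧
  Tendsto (fun k => ‖xk k - x‖⁻¹ • δk k) atTop (𝓝 (0 : Eu l)) ∧
  (∃ θ : ℕ → ℝ, (∀ k, 0 ≤ θ k) ∧ Tendsto θ atTop (𝓝 0) ∧
    ∀ k, ‖‖δk k‖ • lamk k - ‖lamk k‖ • δk k‖ ≤ ‖δk k‖ * ‖lamk k‖ * θ k) ∧
  (∃ M : ℝ, ∀ k, ‖δk k‖ * ‖lamk k‖ / ‖xk k - x‖ ≤ M)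

/-- AM-regularity in direction `d`. -/
def AMRegDir (F : Eu n → Eu l) (Γ : Set (Eu l)) (x d : Eu n) : Prop :=
  ∀ (xk : ℕ → Eu n) (lamk δk : ℕ → Eu l) (ξk : ℕ → Eu n) (ξ : Eu n),
    AMRegDirData F Γ x d xk lamk δk ξk ξ →
    ∃ lam ∈ limNormal Γ (F x), ξ ∈ scalSubdiff F lam x

/-- Strong AM-regularity in direction `d`. -/
def StrongAMRegDir (F : Eu n → Eu l) (F' : Eu n → Eu n → Eu l) (Γ : Set (Eu l))
    (x d : Eu n) : Prop :=
  ∀ (xk : ℕ → Eu n) (lamk δk : ℕ → Eu l) (ξk : ℕ → Eu n) (ξ : Eu n),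
    AMRegDirData F Γ x d xk lamk δk ξk ξ →
    ∃ lam ∈ dirLimNormal Γ (F x) (F' x d), ξ ∈ scalDirSubdiff F F' lam x d

end AMReg

/-- Frechet subgradient. -/
def FSub {n : ℕ} (φ : Eu n → ℝ) (z ξ : Eu n) : Prop :=
  ∀ ε > (0:ℝ), ∀ᶠ y in 𝓝 z, ⟪ξ, y - z⟫ - ε * ‖y - z‖ ≤ φ y - φ z

lemma FSub_of_quad {n : ℕ} (φ : Eu n → ℝ) (z ξ : Eu n) (C : ℝ) (r : Eu n → ℝ)
    (hr : r =o[𝓝 z] (fun y => y - z))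
    (h : ∀ᶠ y in 𝓝 z, ⟪ξ, y - z⟫ - C * ‖y - z‖ ^ 2 - |r y| ≤ φ y - φ z) :
    FSub φ z ξ := by
  intro ε hε
  have h1 := hr.def (half_pos hε)
  have h2 : ∀ᶠ y in 𝓝 z, |C| * ‖y - z‖ < ε / 2 := by
    have : Tendsto (fun y => |C| * ‖y - z‖) (𝓝 z) (𝓝 (|C| * ‖z - z‖)) :=
      Continuous.tendsto (by fun_prop) z
    rw [sub_self, norm_zero, mul_zero] at this
    exact this.eventually (gt_mem_nhds (half_pos hε))
  filter_upwards [h, h1, h2] with y h h1 h2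
  rw [Real.norm_eq_abs] at h1
  have h3 : C * ‖y - z‖ ^ 2 ≤ ε / 2 * ‖y - z‖ := by
    calc C * ‖y - z‖ ^ 2 ≤ |C| * ‖y - z‖ ^ 2 := by gcongr; exact le_abs_self C
      _ = (|C| * ‖y - z‖) * ‖y - z‖ := by ring
      _ ≤ _ := by gcongr
  linarith

lemma FSub.regN {n : ℕ} {φ : Eu n → ℝ} {z ξ : Eu n} (h : FSub φ z ξ) :
    pl2 ξ (-1) ∈ regNormal (epigraphSet φ) (pl2 z (φ z)) := by
  refine ⟨show φ z ≤ φ z from le_rfl, ?_⟩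
  rintro p ⟨-, dk, tk, hdk, htk, ht0, hmem⟩
  have hin : ∀ q : WithLp 2 (Eu n × ℝ), ⟪q, pl2 ξ (-1)⟫ = ⟪ξ, q.fst⟫ - q.snd := by
    intro q
    rw [WithLp.prod_inner_apply]
    simp [pl2, real_inner_comm]
    ring
  rw [hin]
  have hfst : Tendsto (fun k => (dk k).fst) atTop (𝓝 p.fst) :=
    ((WithLp.prod_continuous_ofLp 2 _ _).fst.tendsto p).comp hdk
  have hsnd : Tendsto (fun k => (dk k).snd) atTop (𝓝 p.snd) :=
    ((WithLp.prod_continuous_ofLp 2 _ _).snd.tendsto p).comp hdk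
  have key : ∀ ε > (0:ℝ), ⟪ξ, p.fst⟫ - p.snd ≤ ε * ‖p.fst‖ := by
    intro ε hε
    have hz : Tendsto (fun k => z + tk k • (dk k).fst) atTop (𝓝 z) := by
      simpa using (tendsto_const_nhds (x := z)).add (ht0.smul hfst)
    have hev := hz.eventually (h ε hε)
    have l1 : Tendsto (fun k => ⟪ξ, (dk k).fst⟫ - (dk k).snd) atTop (𝓝 (⟪ξ, p.fst⟫ - p.snd)) :=
      (tendsto_const_nhds.inner hfst).sub hsnd
    have l2 : Tendsto (fun k => ε * ‖(dk k).fst‖) atTop (𝓝 (ε * ‖p.fst‖)) :=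
      hfst.norm.const_mul ε
    refine le_of_tendsto_of_tendsto l1 l2 ?_
    filter_upwards [hev] with k hk
    have hm : φ (z + tk k • (dk k).fst) ≤ φ z + tk k * (dk k).snd := hmem k
    rw [add_sub_cancel_left, inner_smul_right, norm_smul, Real.norm_eq_abs,
      abs_of_pos (htk k)] at hk
    have : tk k * (⟪ξ, (dk k).fst⟫ - (dk k).snd) ≤ tk k * (ε * ‖(dk k).fst‖) := by nlinarith
    exact le_of_mul_le_mul_left this (htk k)
  have l3 : Tendsto (fun ε : ℝ => ε * ‖p.fst‖) (𝓝[>] 0) (𝓝 (0 * ‖p.fst‖)) :=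
    (Continuous.tendsto (by fun_prop) 0).mono_left nhdsWithin_le_nhds
  rw [zero_mul] at l3
  have := ge_of_tendsto l3 (by filter_upwards [self_mem_nhdsWithin] with ε hε using key ε hε)
  exact this

lemma prox_regNormal {l : ℕ} {Γ : Set (Eu l)} {p γ : Eu l} (hγ : γ ∈ Γ)
    (hmin : ∀ γ' ∈ Γ, ‖p - γ‖ ≤ ‖p - γ'‖) {m : ℝ} (hm : 0 ≤ m) :
    m • (p - γ) ∈ regNormal Γ γ := by
  refine ⟨hγ, ?_⟩
  rintro w ⟨-, wk, tk, hwk, htk, ht0, hmem⟩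
  rw [inner_smul_right]
  refine mul_nonpos_of_nonneg_of_nonpos hm ?_
  have l1 : Tendsto (fun k => 2 * ⟪wk k, p - γ⟫) atTop (𝓝 (2 * ⟪w, p - γ⟫)) :=
    (hwk.inner tendsto_const_nhds).const_mul 2
  have l2 : Tendsto (fun k => tk k * ‖wk k‖ ^ 2) atTop (𝓝 (0 * ‖w‖ ^ 2)) :=
    ht0.mul (hwk.norm.pow 2)
  have := le_of_tendsto_of_tendsto' l1 l2 (fun k => by
    have h1 := hmin _ (hmem k)
    have h2 : ‖p - γ‖ ^ 2 ≤ ‖(p - γ) - tk k • wk k‖ ^ 2 := by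
      rw [sub_sub]; gcongr
    rw [norm_sub_sq_real (p - γ), inner_smul_right, norm_smul, Real.norm_eq_abs,
      abs_of_pos (htk k), real_inner_comm] at h2
    have : tk k * (2 * ⟪wk k, p - γ⟫) ≤ tk k * (tk k * ‖wk k‖ ^ 2) := by nlinarith
    exact le_of_mul_le_mul_left this (htk k))
  linarith

/-- Fuzzy rule. -/
lemma fuzzy {n : ℕ} {φ : Eu n → ℝ} (hφ : Continuous φ) {z ξ : Eu n} {c ρ : ℝ} (hc : 0 < c)
    (hρ : 0 < ρ)
    (h : ∀ y ∈ closedBall z ρ, ⟪ξ, y - z⟫ - c * ‖y - z‖ ≤ φ y - φ z) :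
    ∃ z' ξ', ‖z' - z‖ ≤ ρ ∧ ‖ξ' - ξ‖ ≤ 4 * c ∧ FSub φ z' ξ' := by
  obtain ⟨z', hz', hmin⟩ := (isCompact_closedBall z ρ).exists_isMinOn
    (f := fun y => φ y - ⟪ξ, y - z⟫ + 2 * c / ρ * ‖y - z‖ ^ 2)
    ⟨z, mem_closedBall_self hρ.le⟩ (by fun_prop)
  have hle : ‖z' - z‖ ≤ ρ := by simpa [dist_eq_norm] using hz'
  have h0 := hmin (mem_closedBall_self hρ.le)
  simp only [mem_ofPred_eq, sub_self, inner_zero_right, norm_zero] at h0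
  have h1 := h z' hz'
  have hlt : ‖z' - z‖ < ρ := by
    have h2 : 2 * c / ρ * ‖z' - z‖ ^ 2 ≤ c * ‖z' - z‖ := by nlinarith
    rw [div_mul_eq_mul_div, div_le_iff₀ hρ] at h2
    by_contra hcon
    have h3 : ‖z' - z‖ = ρ := le_antisymm hle (not_lt.mp hcon)
    rw [h3] at h2
    have : 0 < c * ρ * ρ := by positivity
    nlinarith
  refine ⟨z', ξ - (2 * (2 * c / ρ)) • (z' - z), hle, ?_, ?_⟩
  · rw [sub_sub_cancel_left, norm_neg, norm_smul, Real.norm_eq_abs, abs_of_pos (by positivity)]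
    calc 2 * (2 * c / ρ) * ‖z' - z‖ ≤ 2 * (2 * c / ρ) * ρ := by gcongr
      _ = 4 * c := by field_simp; ring
  · refine FSub_of_quad φ z' _ (2 * c / ρ) (fun _ => 0) (Asymptotics.isLittleO_zero _ _) ?_
    have hnh : closedBall z ρ ∈ 𝓝 z' :=
      mem_of_superset (isOpen_ball.mem_nhds (by simpa [dist_eq_norm] using hlt))
        ball_subset_closedBall
    filter_upwards [hnh] with y hy
    have h2 := hmin hy
    simp only [mem_ofPred_eq] at h2
    have e1 : y - z = (y - z') + (z' - z) := by abel
    have e2 : ‖y - z‖ ^ 2 = ‖y - z'‖ ^ 2 + 2 * ⟪z' - z, y - z'⟫ + ‖z' - z‖ ^ 2 := by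
      rw [e1, norm_add_sq_real, real_inner_comm]
    have e3 : ⟪ξ, y - z⟫ = ⟪ξ, y - z'⟫ + ⟪ξ, z' - z⟫ := by rw [e1, inner_add_right]
    rw [e2, e3] at h2
    rw [inner_sub_left, inner_smul_left, abs_zero]
    simp only [conj_trivial]
    linarith

lemma dirderiv_seq {n l : ℕ} {F : Eu n → Eu l} {F' : Eu n → Eu n → Eu l}
    (hLip : LocallyLipschitz F) (hF' : IsDirDeriv F F') {x d : Eu n} {t : ℕ → ℝ} {z : ℕ → Eu n}
    (ht : ∀ k, 0 < t k) (ht0 : Tendsto t atTop (𝓝 0))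
    (hz : Tendsto (fun k => (t k)⁻¹ • (z k - x)) atTop (𝓝 d)) :
    Tendsto (fun k => (t k)⁻¹ • (F (z k) - F x)) atTop (𝓝 (F' x d)) := by
  obtain ⟨K, U, hU, hK⟩ := hLip x
  have h1 : Tendsto (fun k => (t k)⁻¹ • (F (x + t k • d) - F x)) atTop (𝓝 (F' x d)) :=
    (hF' x d).comp (tendsto_nhdsWithin_iff.2 ⟨ht0, Eventually.of_forall ht⟩)
  have hzx : Tendsto z atTop (𝓝 x) := by
    have := (tendsto_const_nhds (x := x)).add (ht0.smul hz)
    rw [zero_smul, add_zero] at this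
    refine this.congr fun k => ?_
    rw [smul_inv_smul₀ (ht k).ne']; abel
  have hxd : Tendsto (fun k => x + t k • d) atTop (𝓝 x) := by
    simpa using (tendsto_const_nhds (x := x)).add (ht0.smul (tendsto_const_nhds (x := d)))
  have h2 : Tendsto (fun k => (t k)⁻¹ • (F (z k) - F (x + t k • d))) atTop (𝓝 0) := by
    have hb : Tendsto (fun k => (K:ℝ) * ‖(t k)⁻¹ • (z k - x) - d‖) atTop (𝓝 0) := by
      have := ((hz.sub (tendsto_const_nhds (x := d))).norm).const_mul (K:ℝ)
      simpa using this
    refine squeeze_zero_norm' ?_ hb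
    filter_upwards [hzx hU, hxd hU] with k hk1 hk2
    have := hK.dist_le_mul _ hk1 _ hk2
    rw [dist_eq_norm, dist_eq_norm] at this
    have e : (t k)⁻¹ • (z k - x) - d = (t k)⁻¹ • (z k - (x + t k • d)) := by
      rw [← sub_sub, smul_sub _ (z k - x), inv_smul_smul₀ (ht k).ne']
    rw [e, norm_smul, norm_smul]
    calc _ ≤ ‖(t k)⁻¹‖ * (K * ‖z k - (x + t k • d)‖) := by gcongr
      _ = _ := by ring
  have := h1.add h2
  rw [add_zero] at this
  refine this.congr fun k => ?_
  rw [← smul_add]; congr 1; abel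

lemma A1 {n l : ℕ}
    {f : Eu n → ℝ} (hf : ContDiff ℝ 1 f)
    {F : Eu n → Eu l} {Γ : Set (Eu l)} {x d : Eu n} (hd : d ∈ implCritCone f F Γ x)
    (hd1 : ‖d‖ = 1) {e s τ : ℝ} (he : 0 < e) (hs : 0 < s) (hτ : 0 < τ) :
    ∃ t y, 0 < t ∧ t < τ ∧ F y ∈ Γ ∧ ‖y - x - t • d‖ ≤ e * t ∧ f y - f x ≤ s * t := by
  obtain ⟨hg, -, dk, tk, hdk, htk, ht0, hmem⟩ := hd
  have hgr : HasGradientAt f (gradient f x) x :=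
    (hf.differentiable one_ne_zero x).hasGradientAt
  have hlo := (hasGradientAt_iff_isLittleO.1 hgr).def (show 0 < s / 4 by positivity)
  have hy : Tendsto (fun k => x + tk k • dk k) atTop (𝓝 x) := by
    simpa using (tendsto_const_nhds (x := x)).add (ht0.smul hdk)
  have ev1 := hy.eventually hlo
  have ev2 : ∀ᶠ k in atTop, ⟪gradient f x, dk k⟫ < s / 2 :=
    (tendsto_const_nhds.inner hdk).eventually (gt_mem_nhds (by linarith))
  have ev3 : ∀ᶠ k in atTop, ‖dk k‖ < 2 :=
    hdk.norm.eventually (gt_mem_nhds (by rw [hd1]; norm_num))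
  have ev4 : ∀ᶠ k in atTop, ‖dk k - d‖ < e := by
    have := (hdk.sub (tendsto_const_nhds (x := d))).norm
    rw [sub_self, norm_zero] at this
    exact this.eventually (gt_mem_nhds he)
  have ev5 : ∀ᶠ k in atTop, tk k < τ := ht0.eventually (gt_mem_nhds hτ)
  obtain ⟨k, h1, h2, h3, h4, h5⟩ := (ev1.and (ev2.and (ev3.and (ev4.and ev5)))).exists
  have htp := htk k
  refine ⟨tk k, x + tk k • dk k, htp, h5, hmem k, ?_, ?_⟩
  · rw [add_sub_cancel_left, ← smul_sub, norm_smul, Real.norm_eq_abs, abs_of_pos htp, mul_comm]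
    gcongr
  · rw [add_sub_cancel_left, norm_smul, Real.norm_eq_abs, Real.norm_eq_abs, abs_of_pos htp,
      inner_smul_right] at h1
    have := le_of_abs_le h1
    have h6 : tk k * ⟪gradient f x, dk k⟫ ≤ tk k * (s / 2) := by gcongr
    have h7 : s / 4 * (tk k * ‖dk k‖) ≤ s / 4 * (tk k * 2) := by gcongr
    linarith

lemma A2 {n l : ℕ}
    {f : Eu n → ℝ} (hf : Continuous f)
    {F : Eu n → Eu l} (hF : Continuous F) {Γ : Set (Eu l)} (hΓne : Γ.Nonempty)
    (hΓ : IsClosed Γ) {x y : Eu n} {r : ℝ}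
    (hmin : ∀ z ∈ closedBall x r, F z ∈ Γ → f x ≤ f z) (hy : y ∈ closedBall x r) (hyΓ : F y ∈ Γ)
    {t s : ℝ} (ht : 0 < t) (hs : 0 < s) (hfy : f y - f x ≤ s * t) (M : ℝ) :
    ∃ m ≥ M, ∃ z ∈ closedBall x r,
      (∀ w ∈ closedBall x r, f z + t⁻¹ * ‖z - y‖ ^ 2 + m * (infDist (F z) Γ) ^ 2 ≤
        f w + t⁻¹ * ‖w - y‖ ^ 2 + m * (infDist (F w) Γ) ^ 2) ∧
      t⁻¹ * ‖z - y‖ ^ 2 + m * (infDist (F z) Γ) ^ 2 ≤ 2 * (s * t) := by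
  have hD : Continuous (fun z => infDist (F z) Γ) := (continuous_infDist_pt Γ).comp hF
  have hst : 0 < s * t := mul_pos hs ht
  have hz0 : infDist (F y) Γ = 0 := infDist_zero_of_mem hyΓ
  -- lower bound for the distance on the bad set
  obtain ⟨η, hη, hηb⟩ : ∃ η > (0:ℝ), ∀ z ∈ closedBall x r, f z ≤ f x - s * t →
      η ≤ infDist (F z) Γ := by
    have hK : IsCompact (closedBall x r ∩ {z | f z ≤ f x - s * t}) :=
      (isCompact_closedBall x r).inter_right (isClosed_le hf continuous_const)
    rcases (closedBall x r ∩ {z | f z ≤ f x - s * t}).eq_empty_or_nonempty with h | h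
    · refine ⟨1, one_pos, fun z hz hz' => ?_⟩
      have : z ∈ closedBall x r ∩ {z | f z ≤ f x - s * t} := ⟨hz, hz'⟩
      rw [h] at this; exact this.elim
    · obtain ⟨z0, hz0, hz0m⟩ := hK.exists_isMinOn h hD.continuousOn
      refine ⟨infDist (F z0) Γ, ?_, fun z hz hz' => hz0m ⟨hz, hz'⟩⟩
      rcases (infDist_nonneg (x := F z0) (s := Γ)).lt_or_eq with h' | h'
      · exact h'
      · have := hmin z0 hz0.1 ((hΓ.mem_iff_infDist_zero hΓne).2 h'.symm)
        have := hz0.2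
        simp only [mem_ofPred_eq] at this
        linarith
  obtain ⟨c, hc⟩ := (isCompact_closedBall x r).bddBelow_image hf.continuousOn
  have hcb : ∀ z ∈ closedBall x r, c ≤ f z := fun z hz => hc ⟨z, hz, rfl⟩
  set m : ℝ := max (max M 0) ((f y - c + 1) / η ^ 2) with hm
  have hm0 : 0 ≤ m := (le_max_right M 0).trans (le_max_left _ _)
  obtain ⟨z, hz, hzm⟩ := (isCompact_closedBall x r).exists_isMinOn
    (f := fun z => f z + t⁻¹ * ‖z - y‖ ^ 2 + m * (infDist (F z) Γ) ^ 2) ⟨y, hy⟩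
    (Continuous.continuousOn (by fun_prop))
  refine ⟨m, (le_max_left M 0).trans (le_max_left _ _), z, hz, fun w hw => hzm hw, ?_⟩
  have h1 := hzm hy
  simp only [mem_ofPred_eq, sub_self, norm_zero, hz0] at h1
  have hq : 0 ≤ t⁻¹ * ‖z - y‖ ^ 2 := by positivity
  have hfz : f x - s * t < f z := by
    by_contra hcon
    have h2 := hηb z hz (not_lt.mp hcon)
    have h3 : m * η ^ 2 ≤ m * (infDist (F z) Γ) ^ 2 := by gcongr
    have h4 : f y - c + 1 ≤ m * η ^ 2 := by
      rw [← div_le_iff₀ (by positivity)]; exact le_max_right _ _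
    have := hcb z hz
    linarith
  linarith

lemma keyA {n l : ℕ}
    {f : Eu n → ℝ} (hf : ContDiff ℝ 1 f)
    {F : Eu n → Eu l} (hLip : LocallyLipschitz F)
    {Γ : Set (Eu l)} (hΓne : Γ.Nonempty) (hΓcl : IsClosed Γ)
    {x : Eu n} (hmin : IsLocalMinOn f (F ⁻¹' Γ) x)
    {d : Eu n} (hd : d ∈ implCritCone f F Γ x) (hd1 : ‖d‖ = 1)
    {e : ℝ} (he : 0 < e) (he1 : e ≤ 1) :
    ∃ (t : ℝ) (z : Eu n) (lam δ : Eu l) (ξ : Eu n), 0 < t ∧ t < e ∧ ‖z - x - t • d‖ ≤ e * t ∧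
      ‖δ‖ ≤ e * t ∧ (∃ m : ℝ, 0 ≤ m ∧ lam = m • δ) ∧ ‖δ‖ * ‖lam‖ ≤ t ∧
      lam ∈ regNormal Γ (F z - δ) ∧ FSub (fun y => ⟪lam, F y⟫) z ξ ∧ ‖ξ + gradient f x‖ ≤ e := by
  have hgc : Continuous (gradient f) :=
    (InnerProductSpace.toDual ℝ (Eu n)).symm.continuous.comp (hf.continuous_fderiv one_ne_zero)
  -- the radius
  obtain ⟨r1, hr1, hr1'⟩ : ∃ r1 > (0:ℝ), ∀ z ∈ closedBall x r1, F z ∈ Γ → f x ≤ f z := by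
    have h := hmin
    rw [IsLocalMinOn, IsMinFilter, eventually_nhdsWithin_iff] at h
    obtain ⟨r, hr, hb⟩ := Metric.eventually_nhds_iff_ball.1 h
    refine ⟨r / 2, half_pos hr, fun z hz hzΓ => hb z ?_ hzΓ⟩
    exact closedBall_subset_ball (half_lt_self hr) hz
  obtain ⟨r2, hr2, hr2'⟩ : ∃ r2 > (0:ℝ), ∀ z ∈ ball x r2,
      ‖gradient f z - gradient f x‖ < e / 2 := by
    have h : Tendsto (fun z => ‖gradient f z - gradient f x‖) (𝓝 x)
        (𝓝 ‖gradient f x - gradient f x‖) := Continuous.tendsto (by fun_prop) x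
    rw [sub_self, norm_zero] at h
    exact Metric.eventually_nhds_iff_ball.1 (h.eventually (gt_mem_nhds (half_pos he)))
  set s : ℝ := e ^ 2 / 32 with hs
  have hs0 : 0 < s := by positivity
  obtain ⟨t, y, ht, htτ, hyΓ, hyd, hfy⟩ := A1 hf hd hd1 (half_pos he) hs0
    (show 0 < min e (min (r1 / 2) (r2 / 2)) by positivity)
  have hte : t < e := htτ.trans_le (min_le_left _ _)
  have htr1 : t < r1 / 2 := htτ.trans_le ((min_le_right _ _).trans (min_le_left _ _))
  have htr2 : t < r2 / 2 := htτ.trans_le ((min_le_right _ _).trans (min_le_right _ _))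
  have near : ∀ w : Eu n, ‖w - x - t • d‖ ≤ e * t → ‖w - x‖ ≤ 2 * t := by
    intro w hw
    have h1 : ‖w - x‖ ≤ ‖w - x - t • d‖ + ‖t • d‖ := by
      simpa using norm_add_le (w - x - t • d) (t • d)
    rw [norm_smul, hd1, Real.norm_eq_abs, abs_of_pos ht] at h1
    nlinarith
  have hy : y ∈ closedBall x r1 := by
    rw [mem_closedBall, dist_eq_norm]
    have := near y (hyd.trans (by nlinarith))
    linarith
  obtain ⟨m, hm, z, hz, hzmin, hzle⟩ := A2 hf.continuous hLip.continuous hΓne hΓcl hr1' hy hyΓ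
    ht hs0 hfy t⁻¹
  have hm0 : 0 < m := (inv_pos.2 ht).trans_le hm
  obtain ⟨γ, hγ, hγd⟩ := hΓcl.exists_infDist_eq_dist hΓne (F z)
  rw [dist_eq_norm] at hγd
  have hzq : t⁻¹ * ‖z - y‖ ^ 2 ≤ 2 * (s * t) := by
    have : 0 ≤ m * infDist (F z) Γ ^ 2 := by positivity
    linarith
  have hδq : m * ‖F z - γ‖ ^ 2 ≤ 2 * (s * t) := by
    have : 0 ≤ t⁻¹ * ‖z - y‖ ^ 2 := by positivity
    rw [← hγd]
    linarith
  have hzy : ‖z - y‖ ≤ e / 4 * t := by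
    refine le_of_sq_le_sq ?_ (by positivity)
    rw [inv_mul_le_iff₀ ht] at hzq
    calc _ ≤ _ := hzq
      _ = _ := by rw [hs]; ring
  have hδ : ‖F z - γ‖ ≤ e / 4 * t := by
    refine le_of_sq_le_sq ?_ (by positivity)
    have : t⁻¹ * ‖F z - γ‖ ^ 2 ≤ 2 * (s * t) := le_trans (by gcongr) hδq
    rw [inv_mul_le_iff₀ ht] at this
    calc _ ≤ _ := this
      _ = _ := by rw [hs]; ring
  have hzd : ‖z - x - t • d‖ ≤ e * t := by
    have h1 : z - x - t • d = (z - y) + (y - x - t • d) := by abel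
    rw [h1]
    refine (norm_add_le _ _).trans ?_
    nlinarith [mul_pos he ht]
  have hzx := near z hzd
  have het : 0 < e * t := mul_pos he ht
  refine ⟨t, z, (2 * m) • (F z - γ), F z - γ, -(gradient f z + (2 * t⁻¹) • (z - y)), ht, hte, hzd,
    by linarith, ⟨2 * m, by positivity, rfl⟩, ?_, ?_, ?_, ?_⟩
  · rw [norm_smul, Real.norm_eq_abs, abs_of_pos (by positivity)]
    have h1 : e ^ 2 ≤ 1 := by nlinarith
    have h2 : e ^ 2 * t ≤ 1 * t := by gcongr
    calc ‖F z - γ‖ * (2 * m * ‖F z - γ‖) = 2 * (m * ‖F z - γ‖ ^ 2) := by ring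
      _ ≤ 2 * (2 * (s * t)) := by gcongr
      _ = e ^ 2 * t / 8 := by rw [hs]; ring
      _ ≤ t := by linarith
  · rw [sub_sub_cancel]
    refine prox_regNormal hγ (fun γ' hγ' => ?_) (by positivity)
    rw [← hγd, ← dist_eq_norm]
    exact infDist_le_dist_of_mem hγ'
  · obtain ⟨K, U, hU, hK⟩ := hLip z
    have hgr : HasGradientAt f (gradient f z) z :=
      (hf.differentiable one_ne_zero z).hasGradientAt
    refine FSub_of_quad _ z _ (m * K ^ 2 + t⁻¹) _ (hasGradientAt_iff_isLittleO.1 hgr) ?_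
    have hnh : closedBall x r1 ∈ 𝓝 z := by
      refine mem_of_superset (isOpen_ball.mem_nhds ?_) ball_subset_closedBall
      rw [mem_ball, dist_eq_norm]; linarith
    filter_upwards [hU, hnh] with w hwU hw
    have h1 := hzmin w hw
    have h2 : infDist (F w) Γ ≤ ‖F w - γ‖ := by
      rw [← dist_eq_norm]; exact infDist_le_dist_of_mem hγ
    have h3 : infDist (F w) Γ ^ 2 ≤ ‖F w - γ‖ ^ 2 := by
      have := infDist_nonneg (x := F w) (s := Γ)
      gcongr
    have e1 : ‖F w - γ‖ ^ 2 = ‖F w - F z‖ ^ 2 + 2 * ⟪F z - γ, F w - F z⟫ + ‖F z - γ‖ ^ 2 := by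
      have : F w - γ = (F w - F z) + (F z - γ) := by abel
      rw [this, norm_add_sq_real, real_inner_comm]
    have e2 : ‖w - y‖ ^ 2 = ‖w - z‖ ^ 2 + 2 * ⟪z - y, w - z⟫ + ‖z - y‖ ^ 2 := by
      have : w - y = (w - z) + (z - y) := by abel
      rw [this, norm_add_sq_real, real_inner_comm]
    have h4 : ‖F w - F z‖ ^ 2 ≤ K ^ 2 * ‖w - z‖ ^ 2 := by
      have := hK.dist_le_mul _ hwU _ (mem_of_mem_nhds hU)
      rw [dist_eq_norm, dist_eq_norm] at this
      rw [← mul_pow]; gcongr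
    have h5 : m * infDist (F w) Γ ^ 2 ≤ m * (K ^ 2 * ‖w - z‖ ^ 2 + 2 * ⟪F z - γ, F w - F z⟫
        + ‖F z - γ‖ ^ 2) := by gcongr; linarith
    rw [hγd, e2] at h1
    have h6 := le_abs_self (f w - f z - ⟪gradient f z, w - z⟫)
    rw [← inner_sub_right, inner_neg_left, inner_add_left, inner_smul_left, inner_smul_left]
    simp only [conj_trivial]
    linarith
  · have h1 : -(gradient f z + (2 * t⁻¹) • (z - y)) + gradient f x =
      -((gradient f z - gradient f x) + (2 * t⁻¹) • (z - y)) := by abel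
    rw [h1, norm_neg]
    refine (norm_add_le _ _).trans ?_
    have h2 := hr2' z (by rw [mem_ball, dist_eq_norm]; linarith)
    have h3 : ‖(2 * t⁻¹) • (z - y)‖ ≤ e / 2 := by
      rw [norm_smul, Real.norm_eq_abs, abs_of_pos (by positivity)]
      calc 2 * t⁻¹ * ‖z - y‖ ≤ 2 * t⁻¹ * (e / 4 * t) := by gcongr
        _ = e / 2 := by field_simp; norm_num
    linarith

lemma dirLim_sub_lim {H : Type*} [NormedAddCommGroup H] [InnerProductSpace ℝ H]
    {Ω : Set H} {x d : H} : dirLimNormal Ω x d ⊆ limNormal Ω x := by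
  rintro η ⟨hx, dk, tk, ηk, hdk, htk, ht0, hη, hm⟩
  refine ⟨hx, fun k => x + tk k • dk k, ηk, ?_, hη, hm⟩
  simpa using (tendsto_const_nhds (x := x)).add (ht0.smul hdk)

lemma reg_sub_lim {H : Type*} [NormedAddCommGroup H] [InnerProductSpace ℝ H]
    {Ω : Set H} {x : H} : regNormal Ω x ⊆ limNormal Ω x := by
  intro η h
  exact ⟨h.1, fun _ => x, fun _ => η, tendsto_const_nhds, tendsto_const_nhds, fun _ => h⟩

lemma MStatDir.toMStat {n l : ℕ} {f : Eu n → ℝ} {F : Eu n → Eu l} {F' : Eu n → Eu n → Eu l}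
    {Γ : Set (Eu l)} {x d : Eu n} (h : MStatDir f F F' Γ x d) : MStat f F Γ x := by
  obtain ⟨lam, h1, h2⟩ := h
  exact ⟨lam, dirLim_sub_lim h1, dirLim_sub_lim h2⟩

lemma bounded_case {n l : ℕ}
    {f : Eu n → ℝ}
    {F : Eu n → Eu l} {F' : Eu n → Eu n → Eu l}
    (hLip : LocallyLipschitz F) (hF' : IsDirDeriv F F')
    {Γ : Set (Eu l)} {x : Eu n} (hfeas : F x ∈ Γ) {d : Eu n}
    {t : ℕ → ℝ} {z : ℕ → Eu n} {lam δ : ℕ → Eu l} {ξ : ℕ → Eu n}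
    (ht : ∀ k, 0 < t k) (ht0 : Tendsto t atTop (𝓝 0))
    (hz : Tendsto (fun k => (t k)⁻¹ • (z k - x)) atTop (𝓝 d))
    (hδ : Tendsto (fun k => (t k)⁻¹ • δ k) atTop (𝓝 0))
    (hlam : ∀ k, lam k ∈ regNormal Γ (F (z k) - δ k))
    (hξ : ∀ k, FSub (fun y => ⟪lam k, F y⟫) (z k) (ξ k))
    (hξl : Tendsto ξ atTop (𝓝 (-gradient f x))) {lam0 : Eu l}
    (hl : Tendsto lam atTop (𝓝 lam0)) : MStatDir f F F' Γ x d := by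
  refine ⟨lam0, ?_, ?_⟩
  · obtain ⟨K, U, hU, hK⟩ := hLip x
    obtain ⟨r, hr, hrU⟩ := Metric.mem_nhds_iff.1 hU
    have hzx : Tendsto z atTop (𝓝 x) := by
      have := (tendsto_const_nhds (x := x)).add (ht0.smul hz)
      rw [zero_smul, add_zero] at this
      refine this.congr fun k => ?_
      rw [smul_inv_smul₀ (ht k).ne']; abel
    have hφ : Continuous (fun y => ⟪lam0, F y⟫) := continuous_const.inner hLip.continuous
    have hev : ∀ᶠ k in atTop, z k ∈ ball x r := hzx.eventually (ball_mem_nhds x hr)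
    obtain ⟨N, hN⟩ := eventually_atTop.1 hev
    have hpos : ∀ k : ℕ, 0 < 1 / ((k:ℝ) + 1) := fun k => Nat.one_div_pos_of_nat
    have step : ∀ k, ∃ z' ξ', ‖z' - z (k + N)‖ ≤ t (k + N) * (1 / ((k:ℝ) + 1)) ∧
        ‖ξ' - ξ (k + N)‖ ≤ 4 * (K * ‖lam0 - lam (k + N)‖ + 1 / ((k:ℝ) + 1)) ∧
        FSub (fun y => ⟪lam0, F y⟫) z' ξ' := by
      intro k
      have hzk := hN (k + N) (Nat.le_add_left _ _)
      have hnb : ∀ᶠ y in 𝓝 (z (k + N)), ⟪ξ (k + N), y - z (k + N)⟫ -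
          (K * ‖lam0 - lam (k + N)‖ + 1 / ((k:ℝ) + 1)) * ‖y - z (k + N)‖ ≤
          ⟪lam0, F y⟫ - ⟪lam0, F (z (k + N))⟫ := by
        filter_upwards [hξ (k + N) _ (hpos k), isOpen_ball.mem_nhds hzk] with y h1 h2
        have h3 := hK.dist_le_mul _ (hrU h2) _ (hrU hzk)
        rw [dist_eq_norm, dist_eq_norm] at h3
        have h4 : -(‖lam0 - lam (k + N)‖ * (K * ‖y - z (k + N)‖)) ≤
            ⟪lam0 - lam (k + N), F y - F (z (k + N))⟫ := by
          refine (neg_le_neg ?_).trans (neg_le_of_abs_le (abs_real_inner_le_norm _ _))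
          gcongr
        rw [inner_sub_left, inner_sub_right, inner_sub_right] at h4
        linarith
      obtain ⟨ρ, hρ, hρb⟩ := Metric.nhds_basis_closedBall.eventually_iff.1 hnb
      have htk := ht (k + N)
      obtain ⟨z', ξ', h1, h2, h3⟩ := fuzzy hφ
        (show 0 < K * ‖lam0 - lam (k + N)‖ + 1 / ((k:ℝ) + 1) by have := hpos k; positivity)
        (show 0 < min ρ (t (k + N) * (1 / ((k:ℝ) + 1))) from
          lt_min hρ (mul_pos htk (hpos k)))
        (fun y hy => hρb (closedBall_subset_closedBall (min_le_left _ _) hy))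
      exact ⟨z', ξ', h1.trans (min_le_right _ _), h2, h3⟩
    choose z' ξ' hz' hξ' hsub using step
    have hone : Tendsto (fun k : ℕ => 1 / ((k:ℝ) + 1)) atTop (𝓝 0) :=
      tendsto_one_div_add_atTop_nhds_zero_nat
    have hshift : Tendsto (fun k => k + N) atTop atTop := tendsto_add_atTop_nat N
    have hzd' : Tendsto (fun k => (t (k + N))⁻¹ • (z' k - x)) atTop (𝓝 d) := by
      have h1 : Tendsto (fun k => (t (k + N))⁻¹ • (z' k - z (k + N))) atTop (𝓝 0) := by
        refine squeeze_zero_norm (fun k => ?_) hone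
        rw [norm_smul, norm_inv, Real.norm_eq_abs, abs_of_pos (ht _), inv_mul_le_iff₀ (ht _)]
        exact hz' k
      have := h1.add (hz.comp hshift)
      rw [zero_add] at this
      refine this.congr fun k => ?_
      simp only [Function.comp]
      rw [← smul_add]; congr 1; abel
    have hξl' : Tendsto ξ' atTop (𝓝 (-gradient f x)) := by
      have h1 : Tendsto (fun k => ξ' k - ξ (k + N)) atTop (𝓝 0) := by
        refine squeeze_zero_norm hξ' ?_
        have h2 : Tendsto (fun k => ‖lam0 - lam (k + N)‖) atTop (𝓝 0) := by
          have := ((tendsto_const_nhds (x := lam0)).sub (hl.comp hshift)).norm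
          simpa using this
        simpa using ((h2.const_mul (K:ℝ)).add hone).const_mul 4
      have := h1.add (hξl.comp hshift)
      rw [zero_add] at this
      refine this.congr fun k => ?_
      simp
    have hFd := dirderiv_seq hLip hF' (fun k => ht (k + N)) (ht0.comp hshift) hzd'
    have hcont : Continuous (fun p : Eu n × ℝ => pl2 p.1 p.2) :=
      WithLp.prod_continuous_toLp 2 _ _
    have tpl : ∀ {a : ℕ → Eu n} {b : ℕ → ℝ} {a0 : Eu n} {b0 : ℝ}, Tendsto a atTop (𝓝 a0) →
        Tendsto b atTop (𝓝 b0) → Tendsto (fun k => pl2 (a k) (b k)) atTop (𝓝 (pl2 a0 b0)) :=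
      fun ha hb => (hcont.tendsto _).comp (ha.prodMk_nhds hb)
    refine ⟨show ⟪lam0, F x⟫ ≤ ⟪lam0, F x⟫ from le_rfl,
      fun k => pl2 ((t (k + N))⁻¹ • (z' k - x)) ⟪lam0, (t (k + N))⁻¹ • (F (z' k) - F x)⟫,
      fun k => t (k + N), fun k => pl2 (ξ' k) (-1),
      tpl hzd' (tendsto_const_nhds.inner hFd), fun k => ht _, ht0.comp hshift,
      tpl hξl' tendsto_const_nhds, fun k => ?_⟩
    have heq : pl2 x ⟪lam0, F x⟫ + t (k + N) •
        pl2 ((t (k + N))⁻¹ • (z' k - x)) ⟪lam0, (t (k + N))⁻¹ • (F (z' k) - F x)⟫ =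
        pl2 (z' k) ⟪lam0, F (z' k)⟫ := by
      have htk := (ht (k + N)).ne'
      rw [inner_smul_right, inner_sub_right]
      have a1 : x + t (k + N) • (t (k + N))⁻¹ • (z' k - x) = z' k := by
        rw [smul_inv_smul₀ htk]; abel
      have a2 : ⟪lam0, F x⟫ + t (k + N) * ((t (k + N))⁻¹ * (⟪lam0, F (z' k)⟫ - ⟪lam0, F x⟫)) =
        ⟪lam0, F (z' k)⟫ := by field_simp; ring
      exact congrArg₂ pl2 a1 a2
    simp only [heq]
    exact (hsub k).regN
  · have hFd := dirderiv_seq hLip hF' ht ht0 hz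
    refine ⟨hfeas, fun k => (t k)⁻¹ • (F (z k) - F x) - (t k)⁻¹ • δ k, t, lam, ?_, ht, ht0, hl,
      fun k => ?_⟩
    · simpa using hFd.sub hδ
    · have : F x + t k • ((t k)⁻¹ • (F (z k) - F x) - (t k)⁻¹ • δ k) = F (z k) - δ k := by
        rw [← smul_sub, smul_inv_smul₀ (ht k).ne']; abel
      rw [this]; exact hlam k

/-- Directional AM-regularity yields M-stationarity and strong directional
AM-regularity yields directional M-stationarity of local minimizers. -/
theorem stmt17 {n l : ℕ}
    (f : Eu n → ℝ) (hf : ContDiff ℝ 1 f)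
    (F : Eu n → Eu l) (F' : Eu n → Eu n → Eu l)
    (hLip : LocallyLipschitz F) (hF' : IsDirDeriv F F')
    (Γ : Set (Eu l)) (hΓne : Γ.Nonempty) (hΓcl : IsClosed Γ)
    (x : Eu n) (hfeas : F x ∈ Γ) (hmin : IsLocalMinOn f (F ⁻¹' Γ) x)
    (d : Eu n) (hd : d ∈ implCritCone f F Γ x) (hd1 : ‖d‖ = 1) :
    (AMRegDir F Γ x d → MStat f F Γ x) ∧
    (StrongAMRegDir F F' Γ x d → MStatDir f F F' Γ x d) := by
  have hpos : ∀ k : ℕ, 0 < 1 / ((k:ℝ) + 1) := fun k => Nat.one_div_pos_of_nat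
  have hone : Tendsto (fun k : ℕ => 1 / ((k:ℝ) + 1)) atTop (𝓝 0) :=
    tendsto_one_div_add_atTop_nhds_zero_nat
  have hex : ∀ k : ℕ, ∃ (t : ℝ) (z : Eu n) (lam δ : Eu l) (ξ : Eu n), 0 < t ∧
      t < 1 / (((k + 1 : ℕ):ℝ) + 1) ∧ ‖z - x - t • d‖ ≤ 1 / (((k + 1 : ℕ):ℝ) + 1) * t ∧
      ‖δ‖ ≤ 1 / (((k + 1 : ℕ):ℝ) + 1) * t ∧ (∃ m : ℝ, 0 ≤ m ∧ lam = m • δ) ∧ ‖δ‖ * ‖lam‖ ≤ t ∧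
      lam ∈ regNormal Γ (F z - δ) ∧ FSub (fun y => ⟪lam, F y⟫) z ξ ∧
      ‖ξ + gradient f x‖ ≤ 1 / (((k + 1 : ℕ):ℝ) + 1) := fun k =>
    keyA hf hLip hΓne hΓcl hmin hd hd1 (hpos _) (by
      rw [div_le_one (by positivity)]
      have : (0:ℝ) ≤ ((k + 1 : ℕ):ℝ) := Nat.cast_nonneg _
      linarith)
  have he : Tendsto (fun k : ℕ => 1 / (((k + 1 : ℕ):ℝ) + 1)) atTop (𝓝 0) :=
    hone.comp (tendsto_add_atTop_nat 1)
  choose t z lam δ ξ ht hte hzd hδ hpar hδl hlam hsub hξ using hex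
  have ht0 : Tendsto t atTop (𝓝 0) :=
    squeeze_zero (fun k => (ht k).le) (fun k => (hte k).le) he
  have hz : Tendsto (fun k => (t k)⁻¹ • (z k - x)) atTop (𝓝 d) := by
    rw [tendsto_iff_norm_sub_tendsto_zero]
    refine squeeze_zero (fun _ => norm_nonneg _) (fun k => ?_) he
    have e1 : (t k)⁻¹ • (z k - x) - d = (t k)⁻¹ • (z k - x - t k • d) := by
      rw [smul_sub _ (z k - x), inv_smul_smul₀ (ht k).ne']
    rw [e1, norm_smul, norm_inv, Real.norm_eq_abs, abs_of_pos (ht k), inv_mul_le_iff₀ (ht k),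
      mul_comm]
    exact hzd k
  have hδ0 : Tendsto (fun k => (t k)⁻¹ • δ k) atTop (𝓝 0) := by
    refine squeeze_zero_norm (fun k => ?_) he
    rw [norm_smul, norm_inv, Real.norm_eq_abs, abs_of_pos (ht k), inv_mul_le_iff₀ (ht k),
      mul_comm]
    exact hδ k
  have hξl : Tendsto ξ atTop (𝓝 (-gradient f x)) := by
    rw [tendsto_iff_norm_sub_tendsto_zero]
    refine squeeze_zero (fun _ => norm_nonneg _) (fun k => ?_) he
    rw [sub_neg_eq_add]; exact hξ k
  by_cases hinf : Tendsto (fun k => ‖lam k‖) atTop atTop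
  · have hhalf : ∀ k, t k / 2 ≤ ‖z k - x‖ := by
      intro k
      have h1 : ‖t k • d‖ ≤ ‖z k - x‖ + ‖z k - x - t k • d‖ := by
        have := norm_sub_le (z k - x) (z k - x - t k • d)
        rwa [sub_sub_cancel] at this
      rw [norm_smul, hd1, Real.norm_eq_abs, abs_of_pos (ht k)] at h1
      have h2 : 1 / (((k + 1 : ℕ):ℝ) + 1) ≤ 1 / 2 := by
        apply one_div_le_one_div_of_le two_pos
        push_cast
        have : (0:ℝ) ≤ k := Nat.cast_nonneg _
        linarith
      have h3 := hzd k
      have h4 : 1 / (((k + 1 : ℕ):ℝ) + 1) * t k ≤ 1 / 2 * t k :=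
        mul_le_mul_of_nonneg_right h2 (ht k).le
      linarith
    have hzpos : ∀ k, 0 < ‖z k - x‖ := fun k => (half_pos (ht k)).trans_le (hhalf k)
    have hun : Tendsto (fun k => ‖(t k)⁻¹ • (z k - x)‖⁻¹) atTop (𝓝 1) := by
      have := hz.norm.inv₀ (by rw [hd1]; norm_num)
      rwa [hd1, inv_one] at this
    have hresc : ∀ k, ‖(t k)⁻¹ • (z k - x)‖⁻¹ * (t k)⁻¹ = ‖z k - x‖⁻¹ := by
      intro k
      rw [norm_smul, norm_inv, Real.norm_eq_abs, abs_of_pos (ht k), mul_inv, inv_inv]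
      have := (ht k).ne'
      field_simp
    have hdata : AMRegDirData F Γ x d z lam δ ξ (-gradient f x) := by
      refine ⟨fun k => reg_sub_lim (hsub k).regN, fun k => reg_sub_lim (hlam k), fun k => ?_,
        ?_, ?_, hξl, hinf, ?_, ?_, ⟨fun _ => 0, fun _ => le_rfl, tendsto_const_nhds, fun k => ?_⟩,
        ⟨2, fun k => ?_⟩⟩
      · exact sub_ne_zero.1 (norm_pos_iff.1 (hzpos k))
      · have := (tendsto_const_nhds (x := x)).add (ht0.smul hz)
        rw [zero_smul, add_zero] at this
        refine this.congr fun k => ?_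
        rw [smul_inv_smul₀ (ht k).ne']; abel
      · have := ht0.smul hδ0
        rw [zero_smul] at this
        exact this.congr fun k => smul_inv_smul₀ (ht k).ne' _
      · have := hun.smul hz
        rw [one_smul] at this
        refine this.congr fun k => ?_
        rw [smul_smul, hresc]
      · have := hun.smul hδ0
        rw [one_smul] at this
        refine this.congr fun k => ?_
        rw [smul_smul, hresc]
      · obtain ⟨m, hm, hml⟩ := hpar k
        rw [hml, norm_smul, Real.norm_eq_abs, abs_of_nonneg hm, smul_smul, mul_comm m, sub_self,
          norm_zero, mul_zero]
      · rw [div_le_iff₀ (hzpos k)]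
        have := hδl k
        have := hhalf k
        linarith
    refine ⟨fun h => ?_, fun h => ?_⟩
    · obtain ⟨lam0, h1, h2⟩ := h _ _ _ _ _ hdata
      exact ⟨lam0, h2, h1⟩
    · obtain ⟨lam0, h1, h2⟩ := h _ _ _ _ _ hdata
      exact ⟨lam0, h2, h1⟩
  · have hM : MStatDir f F F' Γ x d := by
      rw [Filter.tendsto_atTop] at hinf
      push Not at hinf
      obtain ⟨M, hM⟩ := hinf
      have hfr : ∃ᶠ k in atTop, lam k ∈ closedBall (0 : Eu l) M := by
        refine Frequently.mono hM fun k hk => ?_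
        rw [mem_closedBall, dist_zero_right]
        exact hk.le
      obtain ⟨lam0, -, φ, hφ, hl⟩ := tendsto_subseq_of_frequently_bounded isBounded_closedBall hfr
      have hφt := hφ.tendsto_atTop
      exact bounded_case hLip hF' hfeas (fun k => ht (φ k)) (ht0.comp hφt) (hz.comp hφt)
        (hδ0.comp hφt) (fun k => hlam (φ k)) (fun k => hsub (φ k)) (hξl.comp hφt) hl
    exact ⟨fun _ => hM.toMStat, fun _ => hM⟩

end
end

section
/- Let x̄ be an AM-stationary point of problem (ODP) and suppose the standing sum-rule assumption holds. Then: (a) if ODP-subMFC is satisfied at x̄, then x̄ is M-stationary; (b) if d ∈ C(x̄) ∩ 𝕊 and ODP-subMFC(d) is satisfied at x̄, then x̄ is M-stationary in direction d. -/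
open Filter Topology Metric Set
open scoped RealInnerProductSpace Pointwise

noncomputable section

section ODP

variable {n l t : ℕ}

/-- The box `Γ_j = ∏_i [a_i^j, b_i^j]` (interval endpoints in the extended reals). -/
def GammaJ (a b : Fin t → Fin l → EReal) (j : Fin t) : Set (Eu l) :=
  {y | ∀ i, a j i ≤ ((y i : ℝ) : EReal) ∧ ((y i : ℝ) : EReal) ≤ b j i}

/-- The orthodisjunctive set `Γ = ⋃_j Γ_j`. -/
def GammaODP (a b : Fin t → Fin l → EReal) : Set (Eu l) := ⋃ j, GammaJ a b j

/-- The index set `I(x, δ)` of active interval endpoints. -/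
def activeI (F : Eu n → Eu l) (a b : Fin t → Fin l → EReal) (x : Eu n) (δ : Eu l) :
    Set (Fin l) :=
  {i | ∃ j, F x - δ ∈ GammaJ a b j ∧
      ((((F x - δ) i : ℝ) : EReal) = a j i ∨ (((F x - δ) i : ℝ) : EReal) = b j i)}

/-- ODP subset Mangasarian–Fromovitz condition. -/
def ODPsubMFC (f : Eu n → ℝ) (F : Eu n → Eu l) (a b : Fin t → Fin l → EReal)
    (x : Eu n) : Prop :=
  ∃ (I : Set (Fin l)) (xk : ℕ → Eu n) (lamk δk : ℕ → Eu l) (εk : ℕ → Eu n),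
    I ⊆ activeI F a b x 0 ∧
    AMSeq f F (GammaODP a b) x xk lamk δk εk ∧
    (∀ k, I = activeI F a b (xk k) (δk k)) ∧
    (I = ∅ ∨ ∀ u : Eu l, u ≠ 0 → (∀ i, 0 ≤ u i) → (∀ i ∉ I, u i = 0) → ∀ k : ℕ,
      (0 : Eu n) ∉ {v | ∃ s : Fin l → Eu n,
        (∀ i ∈ I, s i ∈ u i • limSubdiff (fun y => Real.sign (lamk k i) * F y i) x) ∧
        v = ∑ i, I.indicator s i})

/-- ODP subset Mangasarian–Fromovitz condition in direction `d`. -/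
def ODPsubMFCdir (f : Eu n → ℝ) (F : Eu n → Eu l) (F' : Eu n → Eu n → Eu l)
    (a b : Fin t → Fin l → EReal) (x d : Eu n) : Prop :=
  ∃ (I : Set (Fin l)) (xk : ℕ → Eu n) (lamk δk : ℕ → Eu l) (εk : ℕ → Eu n),
    I ⊆ activeI F a b x 0 ∧
    AMSeqDir f F (GammaODP a b) x xk lamk δk εk d ∧
    (∀ k, I = activeI F a b (xk k) (δk k)) ∧
    (I = ∅ ∨ ∀ u : Eu l, u ≠ 0 → (∀ i, 0 ≤ u i) → (∀ i ∉ I, u i = 0) → ∀ k : ℕ,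
      (0 : Eu n) ∉ {v | ∃ s : Fin l → Eu n,
        (∀ i ∈ I, s i ∈ u i • dirLimSubdiff (fun y => Real.sign (lamk k i) * F y i) x d
            (Real.sign (lamk k i) * F' x d i)) ∧
        v = ∑ i, I.indicator s i})

/-- No nonzero abnormal multiplier constraint qualification. -/
def NNAMCQ (F : Eu n → Eu l) (Γ : Set (Eu l)) (x : Eu n) : Prop :=
  ∀ lam : Eu l, (0 : Eu n) ∈ scalSubdiff F lam x → lam ∈ limNormal Γ (F x) → lam = 0

/-- First-order sufficient condition for metric subregularity in direction `d`. -/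
def FOSCMS (F : Eu n → Eu l) (F' : Eu n → Eu n → Eu l) (Γ : Set (Eu l))
    (x d : Eu n) : Prop :=
  ∀ lam : Eu l, (0 : Eu n) ∈ scalDirSubdiff F F' lam x d →
    lam ∈ dirLimNormal Γ (F x) (F' x d) → lam = 0

end ODP

section Aux

variable {H : Type*} [NormedAddCommGroup H] [InnerProductSpace ℝ H]

lemma aux_dir_sub_lim (Ω : Set H) (x d : H) : dirLimNormal Ω x d ⊆ limNormal Ω x := by
  rintro η ⟨hx, dk, tk, ηk, hd, ht, ht0, hη, h⟩
  refine ⟨hx, fun k => x + tk k • dk k, ηk, ?_, hη, h⟩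
  have := (ht0.smul hd).const_add x
  simpa using this

lemma aux_mem_dir {G : Filter ℕ} [NeBot G] {Ω : Set H} {x d η : H} (hx : x ∈ Ω)
    {dk : ℕ → H} {tk : ℕ → ℝ} {ηk : ℕ → H}
    (hd : Tendsto dk G (𝓝 d)) (ht : ∀ k, 0 < tk k) (ht0 : Tendsto tk G (𝓝 0))
    (hη : Tendsto ηk G (𝓝 η))
    (h : ∀ᶠ k in G, ηk k ∈ limNormal Ω (x + tk k • dk k)) : η ∈ dirLimNormal Ω x d := by
  have key : ∀ m : ℕ, ∃ (d' : H) (t : ℝ) (η' : H), 0 < t ∧ t < 1 / ((m:ℝ) + 1) ∧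
      dist d' d < 2 * (1 / ((m:ℝ) + 1)) ∧ dist η' η < 2 * (1 / ((m:ℝ) + 1)) ∧
      η' ∈ regNormal Ω (x + t • d') := by
    intro m
    set ε : ℝ := 1 / ((m:ℝ) + 1) with hε
    have hε0 : 0 < ε := by positivity
    obtain ⟨k, h1, h2, h3, hxm, zj, ζj, hz, hζ, hreg⟩ :=
      ((Metric.tendsto_nhds.1 hd ε hε0).and ((ht0.eventually_lt_const hε0).and
        ((Metric.tendsto_nhds.1 hη ε hε0).and h))).exists
    have htk := ht k
    obtain ⟨j, hj1, hj2⟩ := ((Metric.tendsto_nhds.1 hz (tk k * ε) (by positivity)).and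
      (Metric.tendsto_nhds.1 hζ ε hε0)).exists
    refine ⟨(tk k)⁻¹ • (zj j - x), tk k, ζj j, htk, h2, ?_, ?_, ?_⟩
    · have : dist ((tk k)⁻¹ • (zj j - x)) (dk k) < ε := by
        have e : (tk k)⁻¹ • (zj j - x) - dk k = (tk k)⁻¹ • (zj j - (x + tk k • dk k)) := by
          rw [← sub_sub, smul_sub _ (zj j - x), smul_smul, inv_mul_cancel₀ htk.ne', one_smul]
        rw [dist_eq_norm, e, norm_smul, norm_inv, Real.norm_of_nonneg htk.le,
          inv_mul_lt_iff₀ htk, ← dist_eq_norm]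
        exact hj1
      linarith [dist_triangle ((tk k)⁻¹ • (zj j - x)) (dk k) d]
    · linarith [dist_triangle (ζj j) (ηk k) η]
    · rw [smul_smul, mul_inv_cancel₀ htk.ne', one_smul, add_sub_cancel]
      exact hreg j
  choose d' t η' k1 k2 k3 k4 k5 using key
  have hlim : Tendsto (fun m : ℕ => 1 / ((m:ℝ) + 1)) atTop (𝓝 0) :=
    tendsto_one_div_add_atTop_nhds_zero_nat
  have hlim2 : Tendsto (fun m : ℕ => 2 * (1 / ((m:ℝ) + 1))) atTop (𝓝 0) := by
    simpa using hlim.const_mul 2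
  refine ⟨hx, d', t, η', ?_, k1, ?_, ?_, k5⟩
  · exact tendsto_iff_dist_tendsto_zero.2
      (squeeze_zero (fun _ => dist_nonneg) (fun m => (k3 m).le) hlim2)
  · exact squeeze_zero (fun m => (k1 m).le) (fun m => (k2 m).le) hlim
  · exact tendsto_iff_dist_tendsto_zero.2
      (squeeze_zero (fun _ => dist_nonneg) (fun m => (k4 m).le) hlim2)

/-- Scaling used to view an arbitrary null sequence as tending to zero in direction `0`. -/
lemma aux_sqrt_scale (r : ℕ → ℝ) (hr0 : ∀ k, 0 ≤ r k) (hr : Tendsto r atTop (𝓝 0)) :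
    ∃ tk : ℕ → ℝ, (∀ k, 0 < tk k) ∧ Tendsto tk atTop (𝓝 0) ∧
      Tendsto (fun k => (tk k)⁻¹ * r k) atTop (𝓝 0) := by
  have hs : Tendsto (fun k => √(r k)) atTop (𝓝 0) := by
    simpa [Function.comp_def] using (Real.continuous_sqrt.tendsto 0).comp hr
  refine ⟨fun k => √(r k) + 1 / ((k:ℝ) + 1), fun k => by positivity, ?_, ?_⟩
  · simpa using hs.add tendsto_one_div_add_atTop_nhds_zero_nat
  · refine squeeze_zero (fun k => by have := hr0 k; positivity) (fun k => ?_) hs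
    rw [inv_mul_le_iff₀ (by positivity)]
    have h1 : 0 ≤ 1 / ((k:ℝ) + 1) * √(r k) := by positivity
    nlinarith [Real.mul_self_sqrt (hr0 k)]

lemma aux_lim_sub_dir (Ω : Set H) (x : H) : limNormal Ω x ⊆ dirLimNormal Ω x 0 := by
  rintro η ⟨hx, xk, ηk, hxk, hη, h⟩
  obtain ⟨tk, ht, ht0, hr⟩ := aux_sqrt_scale (fun k => ‖xk k - x‖) (fun _ => norm_nonneg _)
    (tendsto_iff_norm_sub_tendsto_zero.1 hxk)
  refine ⟨hx, fun k => (tk k)⁻¹ • (xk k - x), tk, ηk, ?_, ht, ht0, hη, fun k => ?_⟩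
  · rw [tendsto_zero_iff_norm_tendsto_zero]
    refine hr.congr fun k => ?_
    rw [norm_smul, norm_inv, Real.norm_of_nonneg (ht k).le]
  · rw [smul_smul, mul_inv_cancel₀ (ht k).ne', one_smul, add_sub_cancel]
    exact h k

lemma aux_tan_of_eventually {Ω : Set H} {x d : H} (hx : x ∈ Ω)
    (h : ∀ᶠ t : ℝ in 𝓝[>] 0, x + t • d ∈ Ω) : d ∈ tanCone Ω x := by
  obtain ⟨s, hs, hs'⟩ := mem_nhdsGT_iff_exists_Ioo_subset.1 h
  have hs : 0 < s := hs
  have hlt : ∀ k : ℕ, 1 / ((k:ℝ) + 1) * (s / 2) < s := by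
    intro k
    have : 1 / ((k:ℝ) + 1) ≤ 1 := by
      rw [div_le_one (by positivity)]
      have : (0:ℝ) ≤ k := by positivity
      linarith
    nlinarith
  refine ⟨hx, fun _ => d, fun k => 1 / ((k:ℝ) + 1) * (s / 2), tendsto_const_nhds,
    fun k => by positivity, ?_, fun k => hs' ⟨by positivity, hlt k⟩⟩
  simpa using (tendsto_one_div_add_atTop_nhds_zero_nat (𝕜 := ℝ)).mul_const (s / 2)

lemma aux_pl2_tendsto {G : Filter ℕ} {v : ℕ → H} {r : ℕ → ℝ} {v0 : H} {r0 : ℝ}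
    (hv : Tendsto v G (𝓝 v0)) (hr : Tendsto r G (𝓝 r0)) :
    Tendsto (fun k => pl2 (v k) (r k)) G (𝓝 (pl2 v0 r0)) :=
  ((WithLp.prod_continuous_toLp 2 H ℝ).tendsto (v0, r0)).comp (hv.prodMk_nhds hr)

lemma aux_pl2_add (x d : H) (a b t : ℝ) :
    pl2 x a + t • pl2 d b = pl2 (x + t • d) (a + t * b) := rfl

lemma aux_inner (p q : WithLp 2 (H × ℝ)) : ⟪p, q⟫ = ⟪p.fst, q.fst⟫ + p.snd * q.snd := by
  rw [WithLp.prod_inner_apply]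
  simp [mul_comm]

lemma aux_zero_mem (x d : H) : (0 : H) ∈ dirLimSubdiff (fun _ : H => (0:ℝ)) x d 0 := by
  have hreg : ∀ y : H, pl2 (0:H) (-1) ∈ regNormal (epigraphSet (fun _ : H => (0:ℝ))) (pl2 y 0) := by
    intro y
    refine ⟨le_refl (0:ℝ), ?_⟩
    rintro v ⟨-, dk, tk, hd, ht, -, h⟩
    have h0 : ∀ k, 0 ≤ (dk k).snd := by
      intro k
      have h2 : (0:ℝ) ≤ 0 + tk k * (dk k).snd := h k
      have := ht k
      by_contra hc
      nlinarith
    have hl : Tendsto (fun k => (dk k).snd) atTop (𝓝 v.snd) :=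
      ((WithLp.prod_continuous_ofLp 2 H ℝ).snd.tendsto v).comp hd
    have := ge_of_tendsto' hl h0
    rw [aux_inner]
    have e1 : (pl2 (0:H) (-1)).fst = 0 := rfl
    have e2 : (pl2 (0:H) (-1)).snd = -1 := rfl
    rw [e1, e2, inner_zero_right]
    linarith
  refine ⟨le_refl (0:ℝ), fun _ => pl2 d 0, fun k => 1 / ((k:ℝ) + 1), fun _ => pl2 0 (-1),
    tendsto_const_nhds, fun k => by positivity, tendsto_one_div_add_atTop_nhds_zero_nat,
    tendsto_const_nhds, fun k => ?_⟩
  rw [aux_pl2_add]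
  simpa using hreg (x + (1 / ((k:ℝ) + 1)) • d)

/-- Limiting subgradients of a `K`-Lipschitz function are bounded by `K`. -/
lemma aux_subdiff_bound {φ : H → ℝ} {y ξ : H} {K : ℝ} {s : Set H} (hs : IsOpen s) (hy : y ∈ s) (hK0 : 0 ≤ K)
    (hφ : ∀ u ∈ s, ∀ v ∈ s, φ u - φ v ≤ K * ‖u - v‖)
    (hξ : ξ ∈ limSubdiff φ y) : ‖ξ‖ ≤ K := by
  obtain ⟨-, pk, ηk, hp, hη, h⟩ := hξ
  have hp1 : Tendsto (fun k => (pk k).fst) atTop (𝓝 y) :=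
    ((WithLp.prod_continuous_ofLp 2 H ℝ).fst.tendsto (pl2 y (φ y))).comp hp
  have hη1 : Tendsto (fun k => (ηk k).fst) atTop (𝓝 ξ) :=
    ((WithLp.prod_continuous_ofLp 2 H ℝ).fst.tendsto (pl2 ξ (-1))).comp hη
  have hη2 : Tendsto (fun k => (ηk k).snd) atTop (𝓝 (-1)) :=
    ((WithLp.prod_continuous_ofLp 2 H ℝ).snd.tendsto (pl2 ξ (-1))).comp hη
  have hlim : Tendsto (fun k => -((ηk k).snd) * K) atTop (𝓝 K) := by
    simpa using hη2.neg.mul_const K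
  refine le_of_tendsto_of_tendsto hη1.norm hlim ?_
  filter_upwards [hp1 (hs.mem_nhds hy)] with k hk
  have hk : (pk k).fst ∈ s := hk
  obtain ⟨hepi, hpol⟩ := h k
  have hepi' : φ (pk k).fst ≤ (pk k).snd := hepi
  set v := (ηk k).fst with hv
  have htan : pl2 v (K * ‖v‖) ∈ tanCone (epigraphSet φ) (pk k) := by
    refine aux_tan_of_eventually hepi ?_
    have hc : Tendsto (fun t : ℝ => (pk k).fst + t • v) (𝓝[>] 0) (𝓝 (pk k).fst) := by
      have : Continuous (fun t : ℝ => (pk k).fst + t • v) := by fun_prop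
      simpa using (this.tendsto 0).mono_left nhdsWithin_le_nhds
    filter_upwards [hc (hs.mem_nhds hk), self_mem_nhdsWithin] with t ht1 ht2
    have ht2 : 0 < t := ht2
    change φ ((pk k).fst + t • v) ≤ (pk k).snd + t * (K * ‖v‖)
    have := hφ _ ht1 _ hk
    rw [add_sub_cancel_left, norm_smul, Real.norm_of_nonneg ht2.le] at this
    nlinarith
  have := hpol _ htan
  rw [aux_inner] at this
  have e1 : (pl2 v (K * ‖v‖)).fst = v := rfl
  have e2 : (pl2 v (K * ‖v‖)).snd = K * ‖v‖ := rfl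
  rw [e1, e2, ← hv, real_inner_self_eq_norm_sq] at this
  rcases (norm_nonneg v).eq_or_lt with h0 | h0
  · -- `v = 0`: the second component must have the right sign
    rw [← h0]
    have hK : 0 ≤ -((ηk k).snd) * K := by
      have hup : pl2 (0:H) 1 ∈ tanCone (epigraphSet φ) (pk k) := by
        refine aux_tan_of_eventually hepi ?_
        filter_upwards [self_mem_nhdsWithin] with t ht2
        have ht2 : 0 < t := ht2
        change φ ((pk k).fst + t • (0:H)) ≤ (pk k).snd + t * 1
        simp
        linarith
      have h3 := hpol _ hup
      rw [aux_inner] at h3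
      have e3 : (pl2 (0:H) 1).fst = 0 := rfl
      have e4 : (pl2 (0:H) 1).snd = 1 := rfl
      rw [e3, e4, inner_zero_left] at h3
      nlinarith
    exact hK
  · by_contra hcon
    push Not at hcon
    nlinarith

lemma aux_ultra_lim {E : Type*} [NormedAddCommGroup E] [ProperSpace E] (U : Ultrafilter ℕ)
    (g : ℕ → E) (K : ℝ) (h : ∀ᶠ k in (U : Filter ℕ), ‖g k‖ ≤ K) :
    ∃ L, Tendsto g U (𝓝 L) := by
  obtain ⟨L, -, hL⟩ := (isCompact_closedBall (0:E) K).ultrafilter_le_nhds (U.map g) (by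
    rw [le_principal_iff]
    change ∀ᶠ k in (U : Filter ℕ), g k ∈ closedBall 0 K
    simpa using h)
  exact ⟨L, hL⟩

lemma aux_sign (U : Ultrafilter ℕ) (g : ℕ → ℝ) :
    ∃ s : ℝ, ∀ᶠ k in (U : Filter ℕ), Real.sign (g k) = s := by
  have : ∀ᶠ k in (U : Filter ℕ), Real.sign (g k) = -1 ∨ (Real.sign (g k) = 0 ∨ Real.sign (g k) = 1) :=
    Eventually.of_forall fun k => Real.sign_apply_eq (g k)
  rcases Ultrafilter.eventually_or.1 this with h | h
  · exact ⟨_, h⟩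
  rcases Ultrafilter.eventually_or.1 h with h | h
  · exact ⟨_, h⟩
  · exact ⟨_, h⟩

end Aux

section AuxODP

variable {n l t : ℕ}

lemma aux_gammaJ_closed (a b : Fin t → Fin l → EReal) (j : Fin t) : IsClosed (GammaJ a b j) := by
  have : GammaJ a b j = ⋂ i, {y : Eu l | a j i ≤ ((y i : ℝ) : EReal) ∧ ((y i : ℝ) : EReal) ≤ b j i} := by
    ext y; simp [GammaJ]
  rw [this]
  refine isClosed_iInter fun i => ?_
  have hc : Continuous (fun y : Eu l => ((y i : ℝ) : EReal)) :=
    continuous_coe_real_ereal.comp (by fun_prop)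
  exact (isClosed_le continuous_const hc).inter (isClosed_le hc continuous_const)

/-- Multipliers vanish at inactive indices. -/
lemma aux_inactive (a b : Fin t → Fin l → EReal) {y η : Eu l} {i : Fin l}
    (hη : η ∈ limNormal (GammaODP a b) y)
    (hi : ∀ j, y ∈ GammaJ a b j → ((y i : ℝ) : EReal) ≠ a j i ∧ ((y i : ℝ) : EReal) ≠ b j i) :
    η i = 0 := by
  obtain ⟨-, zk, ηk, hz, hηk, h⟩ := hη
  have hc : Continuous (fun y : Eu l => ((y i : ℝ) : EReal)) :=
    continuous_coe_real_ereal.comp (by fun_prop)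
  have h1 : ∀ᶠ z in 𝓝 y, ∀ j, z ∈ GammaJ a b j →
      a j i < ((z i : ℝ) : EReal) ∧ ((z i : ℝ) : EReal) < b j i := by
    rw [eventually_all]
    intro j
    by_cases hy : y ∈ GammaJ a b j
    · have ha : a j i < ((y i : ℝ) : EReal) := lt_of_le_of_ne (hy i).1 (hi j hy).1.symm
      have hb : ((y i : ℝ) : EReal) < b j i := lt_of_le_of_ne (hy i).2 (hi j hy).2
      filter_upwards [(hc.tendsto y).eventually_const_lt ha, (hc.tendsto y).eventually_lt_const hb]
        with z hz1 hz2 _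
      exact ⟨hz1, hz2⟩
    · filter_upwards [(aux_gammaJ_closed a b j).isOpen_compl.mem_nhds hy] with z hz1 hz2
      exact absurd hz2 hz1
  have hl : Tendsto (fun k => ηk k i) atTop (𝓝 (η i)) :=
    ((by fun_prop : Continuous (fun y : Eu l => y i)).tendsto η).comp hηk
  refine tendsto_nhds_unique hl (tendsto_const_nhds.congr' ?_)
  filter_upwards [hz.eventually h1] with k hk
  obtain ⟨hmem, hpol⟩ := h k
  obtain ⟨j, hj⟩ := mem_iUnion.1 hmem
  obtain ⟨hja, hjb⟩ := hk j hj
  have htan : ∀ c : ℝ, EuclideanSpace.single i c ∈ tanCone (GammaODP a b) (zk k) := by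
    intro c
    refine aux_tan_of_eventually hmem ?_
    have hcont : Continuous (fun s : ℝ => ((zk k + s • EuclideanSpace.single i c : Eu l))) := by
      fun_prop
    have ht : Tendsto (fun s : ℝ => (((zk k + s • EuclideanSpace.single i c : Eu l) i : ℝ) : EReal))
        (𝓝[>] 0) (𝓝 ((zk k i : ℝ) : EReal)) := by
      have := ((hc.comp hcont).tendsto 0).mono_left (nhdsWithin_le_nhds (s := Ioi 0))
      simpa [Function.comp_def] using this
    filter_upwards [ht.eventually_const_lt hja, ht.eventually_lt_const hjb] with s hs1 hs2
    refine mem_iUnion.2 ⟨j, fun i' => ?_⟩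
    by_cases hii : i' = i
    · subst hii
      exact ⟨hs1.le, hs2.le⟩
    · have : (zk k + s • EuclideanSpace.single i c : Eu l) i' = zk k i' := by simp [hii]
      rw [this]
      exact hj i'
  have e1 := hpol _ (htan 1)
  have e2 := hpol _ (htan (-1))
  rw [EuclideanSpace.inner_single_left] at e1 e2
  simp at e1 e2
  linarith

lemma aux_hadamard {F : Eu n → Eu l} {F' : Eu n → Eu n → Eu l}
    (hLip : LocallyLipschitz F) (hF' : IsDirDeriv F F') {G : Filter ℕ} {x d : Eu n}
    {tk : ℕ → ℝ} {dk : ℕ → Eu n} (ht : ∀ k, 0 < tk k) (ht0 : Tendsto tk G (𝓝 0))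
    (hd : Tendsto dk G (𝓝 d)) :
    Tendsto (fun k => (tk k)⁻¹ • (F (x + tk k • dk k) - F x)) G (𝓝 (F' x d)) := by
  obtain ⟨K, s, hs, hK⟩ := hLip x
  have h1 : Tendsto (fun k => (tk k)⁻¹ • (F (x + tk k • d) - F x)) G (𝓝 (F' x d)) :=
    (hF' x d).comp (tendsto_nhdsWithin_iff.2 ⟨ht0, Eventually.of_forall ht⟩)
  have hx1 : Tendsto (fun k => x + tk k • dk k) G (𝓝 x) := by
    simpa using (ht0.smul hd).const_add x
  have hx2 : Tendsto (fun k => x + tk k • d) G (𝓝 x) := by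
    simpa using (ht0.smul (tendsto_const_nhds (x := d))).const_add x
  have h2 : Tendsto (fun k => (tk k)⁻¹ • (F (x + tk k • dk k) - F (x + tk k • d))) G (𝓝 0) := by
    have hb : Tendsto (fun k => (K:ℝ) * ‖dk k - d‖) G (𝓝 0) := by
      simpa using (tendsto_iff_norm_sub_tendsto_zero.1 hd).const_mul (K:ℝ)
    refine squeeze_zero_norm' ?_ hb
    filter_upwards [hx1 hs, hx2 hs] with k hk1 hk2
    have := hK.norm_sub_le hk1 hk2
    rw [add_sub_add_left_eq_sub, ← smul_sub, norm_smul, Real.norm_of_nonneg (ht k).le] at this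
    rw [norm_smul, norm_inv, Real.norm_of_nonneg (ht k).le, inv_mul_le_iff₀ (ht k)]
    linarith
  have := h2.add h1
  rw [zero_add] at this
  refine this.congr fun k => ?_
  rw [← smul_add, sub_add_sub_cancel]

lemma aux_dirDeriv_zero {F : Eu n → Eu l} {F' : Eu n → Eu n → Eu l}
    (hF' : IsDirDeriv F F') (x : Eu n) : F' x 0 = 0 :=
  tendsto_nhds_unique (hF' x 0) (by simp)

/-- Core of the argument, for directions including `0`. -/
lemma aux_core (f : Eu n → ℝ) (hf : ContDiff ℝ 1 f)
    (F : Eu n → Eu l) (F' : Eu n → Eu n → Eu l)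
    (hLip : LocallyLipschitz F) (hF' : IsDirDeriv F F')
    (a b : Fin t → Fin l → EReal) (hsum : SumRule F F')
    (x : Eu n) (hfeas : F x ∈ GammaODP a b) (d : Eu n)
    (I : Set (Fin l)) (xk : ℕ → Eu n) (lamk δk : ℕ → Eu l) (εk : ℕ → Eu n)
    (hAM : AMSeq f F (GammaODP a b) x xk lamk δk εk)
    (hI : ∀ k, I = activeI F a b (xk k) (δk k))
    (tk : ℕ → ℝ) (ht : ∀ k, 0 < tk k) (ht0 : Tendsto tk atTop (𝓝 0))
    (hd : Tendsto (fun k => (tk k)⁻¹ • (xk k - x)) atTop (𝓝 d))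
    (hδ : Tendsto (fun k => (tk k)⁻¹ • δk k) atTop (𝓝 0))
    (hC : I = ∅ ∨ ∀ u : Eu l, u ≠ 0 → (∀ i, 0 ≤ u i) → (∀ i ∉ I, u i = 0) → ∀ k : ℕ,
      (0 : Eu n) ∉ {v | ∃ s : Fin l → Eu n,
        (∀ i ∈ I, s i ∈ u i • dirLimSubdiff (fun y => Real.sign (lamk k i) * F y i) x d
            (Real.sign (lamk k i) * F' x d i)) ∧
        v = ∑ i, I.indicator s i}) :
    MStatDir f F F' (GammaODP a b) x d := by
  obtain ⟨hsub, hnor, hxk, hδk, hεk⟩ := hAM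
  -- multipliers vanish outside `I`
  have hlam0 : ∀ k, ∀ i ∉ I, lamk k i = 0 := by
    intro k i hi
    refine aux_inactive a b (hnor k) fun j hj => ?_
    rw [hI k] at hi
    constructor
    · intro h; exact hi ⟨j, hj, Or.inl h⟩
    · intro h; exact hi ⟨j, hj, Or.inr h⟩
  -- decomposition
  have hdec : ∀ k, ∃ ξ : Fin l → Eu n,
      (∀ i, ξ i ∈ limSubdiff (fun y => Real.sign (lamk k i) * F y i) (xk k)) ∧
      εk k - gradient f (xk k) = ∑ i, |lamk k i| • ξ i := by
    intro k
    have h1 : εk k - gradient f (xk k) ∈ scalDirSubdiff F F' (lamk k) (xk k) 0 := by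
      have := aux_lim_sub_dir _ _ (hsub k)
      have e : pl2 (0 : Eu n) ⟪lamk k, F' (xk k) 0⟫ = 0 := by
        rw [aux_dirDeriv_zero hF', inner_zero_right]; rfl
      unfold scalDirSubdiff dirLimSubdiff
      rw [e]
      exact this
    rw [hsum] at h1
    obtain ⟨s, hs, hv⟩ := h1
    choose ξ hξ hξs using fun i => Set.mem_smul_set.1 (hs i)
    refine ⟨ξ, fun i => aux_dir_sub_lim _ _ _ (hξ i), ?_⟩
    rw [hv]
    exact Finset.sum_congr rfl fun i _ => (hξs i).symm
  choose ξ hξ hξsum using hdec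
  obtain ⟨U, hU⟩ : ∃ U : Ultrafilter ℕ, (U : Filter ℕ) ≤ atTop :=
    ⟨Ultrafilter.of atTop, Ultrafilter.of_le _⟩
  have hxkU := hxk.mono_left hU
  have hdU := hd.mono_left hU
  have htU := ht0.mono_left hU
  have hxeq : ∀ k, x + tk k • ((tk k)⁻¹ • (xk k - x)) = xk k := by
    intro k
    rw [smul_smul, mul_inv_cancel₀ (ht k).ne', one_smul, add_sub_cancel]
  have hFd : Tendsto (fun k => (tk k)⁻¹ • (F (xk k) - F x)) U (𝓝 (F' x d)) := by
    refine (aux_hadamard hLip hF' ht htU hdU (x := x)).congr fun k => ?_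
    rw [hxeq]
  -- constant signs
  choose σ hσ using fun i => aux_sign U (fun k => lamk k i)
  have hσall : ∀ᶠ k in (U : Filter ℕ), ∀ i, Real.sign (lamk k i) = σ i := eventually_all.2 hσ
  -- boundedness of subgradients
  obtain ⟨K, s, hs, hK⟩ := hLip x
  have hbd : ∀ i, ∀ᶠ k in (U : Filter ℕ), ‖ξ k i‖ ≤ (K : ℝ) := by
    intro i
    filter_upwards [hxkU (interior_mem_nhds.2 hs)] with k hk
    refine aux_subdiff_bound isOpen_interior hk K.2 ?_ (hξ k i)
    intro u hu v hv
    have h1 := hK.norm_sub_le (interior_subset hu) (interior_subset hv)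
    have h2 : |(F u - F v) i| ≤ ‖F u - F v‖ := PiLp.norm_apply_le (F u - F v) i
    have h3 : |Real.sign (lamk k i)| ≤ 1 := by
      rcases Real.sign_apply_eq (lamk k i) with h | h | h <;> rw [h] <;> norm_num
    calc Real.sign (lamk k i) * F u i - Real.sign (lamk k i) * F v i
        = Real.sign (lamk k i) * (F u - F v) i := by simp [mul_sub]
      _ ≤ |Real.sign (lamk k i)| * |(F u - F v) i| := by rw [← abs_mul]; exact le_abs_self _
      _ ≤ 1 * |(F u - F v) i| := by gcongr
      _ ≤ K * ‖u - v‖ := by linarith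
  choose ξ0 hξ0 using fun i => aux_ultra_lim U (fun k => ξ k i) K (hbd i)
  have hξmem : ∀ i, ξ0 i ∈ dirLimSubdiff (fun y => σ i * F y i) x d (σ i * F' x d i) := by
    intro i
    have hα : Tendsto (fun k => σ i * ((tk k)⁻¹ • (F (xk k) - F x)) i) U (𝓝 (σ i * F' x d i)) :=
      (((by fun_prop : Continuous (fun y : Eu l => y i)).tendsto _).comp hFd).const_mul _
    refine aux_mem_dir (le_refl (σ i * F x i)) (aux_pl2_tendsto hdU hα) ht htU
      (aux_pl2_tendsto (hξ0 i) tendsto_const_nhds) ?_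
    filter_upwards [hσall] with k hk
    have h1 := hξ k i
    rw [hk i] at h1
    have e : σ i * F x i + tk k * (σ i * ((tk k)⁻¹ • (F (xk k) - F x)) i) = σ i * F (xk k) i := by
      have := (ht k).ne'
      simp
      field_simp
      ring
    rw [aux_pl2_add, hxeq, e]
    exact h1
  -- normalized multipliers
  set μ : ℕ → ℝ := fun k => (max 1 ‖lamk k‖)⁻¹ with hμ
  have hμpos : ∀ k, 0 < μ k := fun k => by positivity
  have hμ1 : ∀ k, μ k ≤ 1 := fun k => inv_le_one_of_one_le₀ (le_max_left _ _)
  have hcn : ∀ k, ‖μ k • lamk k‖ ≤ 1 := by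
    intro k
    rw [norm_smul, Real.norm_of_nonneg (hμpos k).le, inv_mul_le_iff₀ (by positivity), mul_one]
    exact le_max_right _ _
  obtain ⟨μ0, hμ0⟩ := aux_ultra_lim U μ 1 (Eventually.of_forall fun k => by
    rw [Real.norm_of_nonneg (hμpos k).le]; exact hμ1 k)
  obtain ⟨c, hc⟩ := aux_ultra_lim U (fun k => μ k • lamk k) 1 (Eventually.of_forall hcn)
  have hci : ∀ i, Tendsto (fun k => (μ k • lamk k) i) U (𝓝 (c i)) := fun i =>
    ((by fun_prop : Continuous (fun y : Eu l => y i)).tendsto c).comp hc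
  have hgrad : Continuous (gradient f) := by
    have : Continuous (fderiv ℝ f) := hf.continuous_fderiv (by norm_num)
    exact (InnerProductSpace.toDual ℝ (Eu n)).symm.continuous.comp this
  have hlim1 : Tendsto (fun k => μ k • (εk k - gradient f (xk k))) U
      (𝓝 (μ0 • (0 - gradient f x))) :=
    hμ0.smul ((hεk.mono_left hU).sub ((hgrad.tendsto x).comp hxkU))
  have hlim2 : Tendsto (fun k => μ k • (εk k - gradient f (xk k))) U
      (𝓝 (∑ i, |c i| • ξ0 i)) := by
    have : Tendsto (fun k => ∑ i, |(μ k • lamk k) i| • ξ k i) U (𝓝 (∑ i, |c i| • ξ0 i)) :=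
      tendsto_finsetSum _ fun i _ => (hci i).abs.smul (hξ0 i)
    refine this.congr fun k => ?_
    rw [hξsum k, Finset.smul_sum]
    refine Finset.sum_congr rfl fun i _ => ?_
    rw [PiLp.smul_apply, smul_eq_mul, abs_mul, abs_of_pos (hμpos k), mul_smul]
  have heq : μ0 • (0 - gradient f x) = ∑ i, |c i| • ξ0 i := tendsto_nhds_unique hlim1 hlim2
  have hcI : ∀ i ∉ I, c i = 0 := by
    intro i hi
    refine tendsto_nhds_unique (hci i) (tendsto_const_nhds.congr fun k => ?_)
    simp [hlam0 k i hi]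
  by_cases hμz : μ0 = 0
  · -- unbounded multipliers: contradiction
    exfalso
    have hc1 : ‖c‖ = 1 := by
      refine tendsto_nhds_unique hc.norm (tendsto_const_nhds.congr' ?_)
      rw [hμz] at hμ0
      filter_upwards [hμ0.eventually_lt_const one_pos] with k hk
      have h1 : 1 < ‖lamk k‖ := by
        by_contra hcon
        push Not at hcon
        simp [hμ, max_eq_left hcon] at hk
      have h2 : μ k = ‖lamk k‖⁻¹ := by simp [hμ, max_eq_right h1.le]
      rw [norm_smul, Real.norm_of_nonneg (hμpos k).le, h2, inv_mul_cancel₀ (by positivity)]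
    have hcne : c ≠ 0 := by
      rintro rfl
      simp at hc1
    rcases hC with hE | hC
    · apply hcne
      ext i
      simpa using hcI i (by simp [hE])
    · obtain ⟨k, hk⟩ := hσall.exists
      refine hC (WithLp.toLp 2 fun i => |c i|) ?_ (fun i => abs_nonneg _) ?_ k
        ⟨fun i => |c i| • ξ0 i, ?_, ?_⟩
      · intro h
        apply hcne
        ext i
        have := congrArg (fun y : Eu l => y i) h
        simpa using this
      · intro i hi
        simp [hcI i hi]
      · intro i _
        rw [hk i]
        exact Set.smul_mem_smul_set (hξmem i)
      · rw [hμz, zero_smul] at heq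
        rw [heq]
        refine Finset.sum_congr rfl fun i _ => ?_
        by_cases hi : i ∈ I
        · rw [Set.indicator_of_mem hi]
        · rw [Set.indicator_of_notMem hi, hcI i hi]
          simp
  · -- bounded multipliers
    have hμ0pos : 0 < μ0 := lt_of_le_of_ne
      (ge_of_tendsto hμ0 (Eventually.of_forall fun k => (hμpos k).le)) (Ne.symm hμz)
    set lam : Eu l := μ0⁻¹ • c with hlam
    have hlamk : Tendsto lamk U (𝓝 lam) := by
      refine ((hμ0.inv₀ hμz).smul hc).congr fun k => ?_
      rw [smul_smul, inv_mul_cancel₀ (hμpos k).ne', one_smul]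
    refine ⟨lam, ?_, ?_⟩
    · rw [hsum]
      refine ⟨fun i => |lam i| • ξ0 i, fun i => ?_, ?_⟩
      · have hli : Tendsto (fun k => lamk k i) U (𝓝 (lam i)) :=
          ((by fun_prop : Continuous (fun y : Eu l => y i)).tendsto lam).comp hlamk
        rcases lt_trichotomy (lam i) 0 with h | h | h
        · obtain ⟨k, hk1, hk2⟩ := ((hσ i).and (hli.eventually_lt_const h)).exists
          rw [Real.sign_of_neg hk2] at hk1
          rw [Real.sign_of_neg h, hk1]
          exact Set.smul_mem_smul_set (hξmem i)
        · beta_reduce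
          rw [h, Real.sign_zero, abs_zero, zero_smul]
          simp only [zero_mul]
          exact Set.mem_smul_set.2 ⟨0, aux_zero_mem x d, smul_zero _⟩
        · obtain ⟨k, hk1, hk2⟩ := ((hσ i).and (hli.eventually_const_lt h)).exists
          rw [Real.sign_of_pos hk2] at hk1
          rw [Real.sign_of_pos h, hk1]
          exact Set.smul_mem_smul_set (hξmem i)
      · have : -gradient f x = μ0⁻¹ • (μ0 • (0 - gradient f x)) := by
          rw [smul_smul, inv_mul_cancel₀ hμz, one_smul, zero_sub]
        rw [this, heq, Finset.smul_sum]
        refine Finset.sum_congr rfl fun i _ => ?_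
        beta_reduce
        rw [hlam, PiLp.smul_apply, smul_eq_mul, abs_mul, abs_of_pos (inv_pos.2 hμ0pos), mul_smul]
    · have hdk : Tendsto (fun k => (tk k)⁻¹ • (F (xk k) - F x) - (tk k)⁻¹ • δk k) U
          (𝓝 (F' x d)) := by
        simpa using hFd.sub (hδ.mono_left hU)
      refine aux_mem_dir hfeas hdk ht htU hlamk (Eventually.of_forall fun k => ?_)
      have e : F x + tk k • ((tk k)⁻¹ • (F (xk k) - F x) - (tk k)⁻¹ • δk k) = F (xk k) - δk k := by
        rw [← smul_sub, smul_smul, mul_inv_cancel₀ (ht k).ne', one_smul]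
        abel
      rw [e]
      exact hnor k

end AuxODP

/-- (Directional) ODP-subMFC serves as a qualification condition ensuring (directional)
M-stationarity of AM-stationary points of the orthodisjunctive problem. -/
theorem stmt18 {n l t : ℕ}
    (f : Eu n → ℝ) (hf : ContDiff ℝ 1 f)
    (F : Eu n → Eu l) (F' : Eu n → Eu n → Eu l)
    (hLip : LocallyLipschitz F) (hF' : IsDirDeriv F F')
    (a b : Fin t → Fin l → EReal) (hab : ∀ j i, a j i ≤ b j i)
    (hsum : SumRule F F')
    (x : Eu n) (hfeas : F x ∈ GammaODP a b)
    (hAM : AMStat f F (GammaODP a b) x) :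
    (ODPsubMFC f F a b x → MStat f F (GammaODP a b) x) ∧
    (∀ d ∈ critCone f F F' (GammaODP a b) x, ‖d‖ = 1 →
      ODPsubMFCdir f F F' a b x d → MStatDir f F F' (GammaODP a b) x d) := by
  refine ⟨?_, ?_⟩
  · rintro ⟨I, xk, lamk, δk, εk, -, hA, hI, hC⟩
    have hr : Tendsto (fun k => ‖xk k - x‖ + ‖δk k‖) atTop (𝓝 0) := by
      simpa using (tendsto_iff_norm_sub_tendsto_zero.1 hA.2.2.1).add hA.2.2.2.1.norm
    obtain ⟨tk, ht, ht0, hr⟩ := aux_sqrt_scale _ (fun k => by positivity) hr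
    have hd : Tendsto (fun k => (tk k)⁻¹ • (xk k - x)) atTop (𝓝 0) := by
      refine squeeze_zero_norm (fun k => ?_) hr
      have := inv_pos.2 (ht k)
      rw [norm_smul, Real.norm_of_nonneg this.le]
      gcongr
      linarith [norm_nonneg (δk k)]
    have hδ : Tendsto (fun k => (tk k)⁻¹ • δk k) atTop (𝓝 0) := by
      refine squeeze_zero_norm (fun k => ?_) hr
      have := inv_pos.2 (ht k)
      rw [norm_smul, Real.norm_of_nonneg this.le]
      gcongr
      linarith [norm_nonneg (xk k - x)]
    obtain ⟨lam, h1, h2⟩ := aux_core f hf F F' hLip hF' a b hsum x hfeas 0 I xk lamk δk εk hA hI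
      tk ht ht0 hd hδ (hC.imp_right fun h u hu hu0 huI k => by
        rintro ⟨s, hs, hv⟩
        refine h u hu hu0 huI k ⟨s, fun i hi => ?_, hv⟩
        obtain ⟨ξ, hξ, hξs⟩ := Set.mem_smul_set.1 (hs i hi)
        exact Set.mem_smul_set.2 ⟨ξ, aux_dir_sub_lim _ _ _ hξ, hξs⟩)
    exact ⟨lam, aux_dir_sub_lim _ _ _ h1, aux_dir_sub_lim _ _ _ h2⟩
  · rintro d - - ⟨I, xk, lamk, δk, εk, -, ⟨hA, hne, hd, hδ, -, -⟩, hI, hC⟩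
    exact aux_core f hf F F' hLip hF' a b hsum x hfeas d I xk lamk δk εk hA hI
      (fun k => ‖xk k - x‖) (fun k => norm_pos_iff.2 (sub_ne_zero.2 (hne k)))
      (tendsto_iff_norm_sub_tendsto_zero.1 hA.2.2.1) hd hδ hC

end
end
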